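/- Let μ ∈ M(0,1). Then for all sufficiently large n, the quantity 1/κ_n² := ∫ Q_n²(x) r(x) dμ(x) is nonzero, and for such n the polynomials Q_n satisfy the three-term recurrence Q_{n+1}(z) = (z − β_n) Q_n(z) − α_n² Q_{n−1}(z), where β_n = κ_n² ∫ x Q_n²(x) r(x) dμ(x) and α_n² = κ_{n−1}²/κ_n²; moreover lim_{n→∞} β_n = 0 and lim_{n→∞} α_n² = 1/4. -/

import Mathlib

open MeasureTheory Polynomial Filter Topology Set
open scoped Classical

/-- The branch of `√(z²-1)` on `ℂ ∖ [-1,1]` that is positive for `z > 1`. -/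
noncomputable def sqrtB (z : ℂ) : ℂ := z * (1 - 1 / z ^ 2) ^ ((1 : ℂ) / 2)

/-- `φ(z) = z + √(z²-1)`, the conformal map of `ℂ ∖ [-1,1]` onto the exterior
of the closed unit disk. -/
noncomputable def phi (z : ℂ) : ℂ := z + sqrtB z

/-- The support of a measure on `ℝ`: points all of whose neighborhoods have
positive measure. -/
def msupp (μ : Measure ℝ) : Set ℝ := {x | ∀ U ∈ nhds x, μ U ≠ 0}

/-- The support `S_μ`, viewed as a subset of `ℂ`. -/
def msuppC (μ : Measure ℝ) : Set ℂ := Complex.ofReal '' msupp μ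

/-- `l` is the sequence of orthonormal polynomials of the measure `μ`:
degree `n`, positive leading coefficient, `∫ l_m l_n dμ = δ_{mn}`. -/
structure IsOrthonormalPolys (μ : Measure ℝ) (l : ℕ → Polynomial ℝ) : Prop where
  natDegree_eq : ∀ n, (l n).natDegree = n
  leadingCoeff_pos : ∀ n, 0 < (l n).leadingCoeff
  orthonormal : ∀ m n, ∫ x, (l m).eval x * (l n).eval x ∂μ = if m = n then 1 else 0

/-- `μ ∈ M(0,1)`: the recurrence coefficients of the orthonormal polynomials
`l_n` satisfy `a_n → 1/2`, `b_n → 0`, where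
`x·l_n = a_{n+1} l_{n+1} + b_n l_n + a_n l_{n-1}`. -/
structure IsM01 (μ : Measure ℝ) (l : ℕ → Polynomial ℝ) (a b : ℕ → ℝ) : Prop where
  onp : IsOrthonormalPolys μ l
  recurrence_zero : X * l 0 = a 1 • l 1 + b 0 • l 0
  recurrence : ∀ n : ℕ,
    X * l (n + 1) = a (n + 2) • l (n + 2) + b (n + 1) • l (n + 1) + a (n + 1) • l n
  tendsto_a : Tendsto a atTop (nhds (1 / 2))
  tendsto_b : Tendsto b atTop (nhds 0)

/-- The rational function `r = S/T` with
`S(z) = ∏ (z-c_i)^{A_i}`, `T(z) = ∏ (z-d_j)^{B_j}`, evaluated on the real line. -/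
noncomputable def ratFn {h ℓ : ℕ} (c : Fin h → ℂ) (d : Fin ℓ → ℂ)
    (A : Fin h → ℕ) (B : Fin ℓ → ℕ) (x : ℝ) : ℂ :=
  (∏ i, ((x : ℂ) - c i) ^ (A i)) / ∏ j, ((x : ℂ) - d j) ^ (B j)

/-- `Q` is the monic polynomial of least degree, not identically zero, with
`∫ p(x) Q(x) r(x) dμ(x) = 0` for every polynomial `p` of degree `≤ n-1`. -/
def IsQPoly (μ : Measure ℝ) (r : ℝ → ℂ) (n : ℕ) (Q : Polynomial ℂ) : Prop :=
  Q.Monic ∧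
  (∀ p : Polynomial ℂ, p.degree < n →
    ∫ x, p.eval (x : ℂ) * Q.eval (x : ℂ) * r x ∂μ = 0) ∧
  (∀ q : Polynomial ℂ, q ≠ 0 →
    (∀ p : Polynomial ℂ, p.degree < n →
      ∫ x, p.eval (x : ℂ) * q.eval (x : ℂ) * r x ∂μ = 0) →
    Q.degree ≤ q.degree)


/-! ### Part 1: shifts, diagonal and compact operators on a Hilbert space with a basis -/

section Abstract

set_option linter.unusedSectionVars false

variable {H : Type*} [NormedAddCommGroup H] [InnerProductSpace ℂ H] [CompleteSpace H]

/-- `V` is the unilateral shift of the basis `e`, and `W` is its adjoint. -/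
structure ShiftPair (e : HilbertBasis ℕ ℂ H) (V W : H →L[ℂ] H) : Prop where
  basis : ∀ k, V (e k) = e (k + 1)
  adj : ∀ f g, inner ℂ (W f) g = inner ℂ f (V g)
  normV : ‖V‖ ≤ 1
  normW : ‖W‖ ≤ 1

theorem hb_ext (e : HilbertBasis ℕ ℂ H) {f g : H} (h : ∀ k, inner ℂ (e k) f = inner ℂ (e k) g) :
    f = g := by
  apply e.repr.injective
  ext k
  simp only [HilbertBasis.repr_apply_apply]
  exact h k

theorem hb_op_ext (e : HilbertBasis ℕ ℂ H) {S T : H →L[ℂ] H} (h : ∀ k, S (e k) = T (e k)) :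
    S = T := by
  apply ContinuousLinearMap.ext_on (s := Set.range e)
  · rw [dense_iff_closure_eq]
    have := e.dense_span
    rw [← Submodule.topologicalClosure_coe, this]; rfl
  · rintro _ ⟨k, rfl⟩
    exact h k

theorem hb_inner (e : HilbertBasis ℕ ℂ H) (i j : ℕ) :
    inner ℂ (e i) (e j) = if i = j then (1 : ℂ) else 0 :=
  (orthonormal_iff_ite.mp e.orthonormal) i j

theorem exists_shift (e : HilbertBasis ℕ ℂ H) : ∃ V W : H →L[ℂ] H, ShiftPair e V W := by
  have ho : Orthonormal ℂ (fun k => e (k + 1)) :=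
    e.orthonormal.comp (fun k => k + 1) (add_left_injective 1)
  let L := ho.orthogonalFamily.linearIsometry
  let V : H →L[ℂ] H := L.toContinuousLinearMap.comp
    (e.repr.toContinuousLinearEquiv : H →L[ℂ] lp (fun _ : ℕ => ℂ) 2)
  have hn : ‖V‖ ≤ 1 := by
    apply ContinuousLinearMap.opNorm_le_bound _ zero_le_one
    intro x
    simp [V]
  refine ⟨V, ContinuousLinearMap.adjoint V, ?_, ?_, hn, ?_⟩
  · intro k
    have : V (e k) = L (e.repr (e k)) := rfl
    rw [this, HilbertBasis.repr_self]
    simp [L]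
  · intro f g
    exact ContinuousLinearMap.adjoint_inner_left V g f
  · rw [LinearIsometryEquiv.norm_map]; exact hn

namespace ShiftPair

variable {e : HilbertBasis ℕ ℂ H} {V W : H →L[ℂ] H}

theorem adj' (h : ShiftPair e V W) (f g : H) : inner ℂ f (W g) = inner ℂ (V f) g := by
  rw [← inner_conj_symm, h.adj, inner_conj_symm]

theorem W_succ (h : ShiftPair e V W) (k : ℕ) : W (e (k + 1)) = e k := by
  apply hb_ext e
  intro j
  rw [h.adj', h.basis, hb_inner, hb_inner]
  simp

theorem W_zero (h : ShiftPair e V W) : W (e 0) = 0 := by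
  apply hb_ext e
  intro j
  rw [h.adj', h.basis, hb_inner]
  simp

theorem WV (h : ShiftPair e V W) : W * V = 1 := by
  apply hb_op_ext e
  intro k
  simp [h.basis, h.W_succ]

theorem WVn (h : ShiftPair e V W) (n : ℕ) : W ^ n * V ^ n = 1 := by
  induction n with
  | zero => simp
  | succ n ih =>
    rw [pow_succ, pow_succ', mul_assoc, ← mul_assoc W V, h.WV, one_mul, ih]

theorem Vn (h : ShiftPair e V W) (n k : ℕ) : (V ^ n) (e k) = e (n + k) := by
  induction n with
  | zero => simp
  | succ n ih =>
    rw [pow_succ', mul_apply_eq_comp, ih, h.basis]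
    congr 1; ring

theorem Wn_add (h : ShiftPair e V W) (n k : ℕ) : (W ^ n) (e (n + k)) = e k := by
  rw [← h.Vn, ← mul_apply_eq_comp, h.WVn]; rfl

theorem Wn_lt (h : ShiftPair e V W) (n k : ℕ) (hk : k < n) : (W ^ n) (e k) = 0 := by
  obtain ⟨m, rfl⟩ : ∃ m, n = (m + 1) + k := ⟨n - k - 1, by omega⟩
  rw [pow_add, pow_succ, mul_apply_eq_comp]
  have := h.Wn_add k 0
  rw [add_zero] at this
  rw [this, mul_apply_eq_comp, h.W_zero, map_zero]

theorem adjn (h : ShiftPair e V W) (n : ℕ) (f g : H) :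
    inner ℂ ((W ^ n) f) g = inner ℂ f ((V ^ n) g) := by
  induction n generalizing f g with
  | zero => simp
  | succ n ih =>
    rw [pow_succ', mul_apply_eq_comp, h.adj, ih, pow_succ,
      mul_apply_eq_comp]

theorem adjn' (h : ShiftPair e V W) (n : ℕ) (f g : H) :
    inner ℂ f ((W ^ n) g) = inner ℂ ((V ^ n) f) g := by
  rw [← inner_conj_symm, h.adjn, inner_conj_symm]

theorem VWn_of (h : ShiftPair e V W) (n : ℕ) (g : H) (hg : ∀ k < n, inner ℂ (e k) g = 0) :
    (V ^ n) ((W ^ n) g) = g := by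
  apply hb_ext e
  intro k
  rw [← h.adjn]
  by_cases hk : k < n
  · rw [h.Wn_lt n k hk, hg k hk, inner_zero_left]
  · obtain ⟨m, rfl⟩ := Nat.exists_eq_add_of_le (not_lt.mp hk)
    rw [h.Wn_add, h.adjn', h.Vn]

theorem normWn (h : ShiftPair e V W) (n : ℕ) : ‖W ^ n‖ ≤ 1 := by
  rcases Nat.eq_zero_or_pos n with rfl | hn
  · rw [pow_zero]; exact ContinuousLinearMap.norm_id_le
  · exact (norm_pow_le' W hn).trans (pow_le_one₀ (norm_nonneg _) h.normW)

theorem normVn (h : ShiftPair e V W) (n : ℕ) : ‖V ^ n‖ ≤ 1 := by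
  rcases Nat.eq_zero_or_pos n with rfl | hn
  · rw [pow_zero]; exact ContinuousLinearMap.norm_id_le
  · exact (norm_pow_le' V hn).trans (pow_le_one₀ (norm_nonneg _) h.normV)

theorem Wn_le (h : ShiftPair e V W) (n : ℕ) (f : H) : ‖(W ^ n) f‖ ≤ ‖f‖ := by
  have := (W ^ n).le_of_opNorm_le (h.normWn n) f
  simpa using this

theorem tendsto_Wn (h : ShiftPair e V W) (f : H) :
    Tendsto (fun n => (W ^ n) f) atTop (𝓝 0) := by
  rw [Metric.tendsto_atTop]
  intro ε hε
  have hd : f ∈ closure (Submodule.span ℂ (Set.range e) : Set H) := by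
    have := e.dense_span
    rw [← Submodule.topologicalClosure_coe, this]; trivial
  obtain ⟨g, hg, hfg⟩ := Metric.mem_closure_iff.mp hd ε hε
  have : ∃ N, ∀ n ≥ N, (W ^ n) g = 0 := by
    clear hfg
    induction hg using Submodule.span_induction with
    | mem x hx =>
      obtain ⟨k, rfl⟩ := hx
      exact ⟨k + 1, fun n hn => h.Wn_lt n k (by omega)⟩
    | zero => exact ⟨0, fun n _ => map_zero _⟩
    | add x y _ _ hx hy =>
      obtain ⟨N, hN⟩ := hx
      obtain ⟨M, hM⟩ := hy
      exact ⟨max N M, fun n hn => by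
        rw [map_add, hN n (le_of_max_le_left hn), hM n (le_of_max_le_right hn), add_zero]⟩
    | smul a x _ hx =>
      obtain ⟨N, hN⟩ := hx
      exact ⟨N, fun n hn => by rw [map_smul, hN n hn, smul_zero]⟩
  obtain ⟨N, hN⟩ := this
  refine ⟨N, fun n hn => ?_⟩
  rw [dist_zero_right]
  have h1 : (W ^ n) f = (W ^ n) (f - g) := by rw [map_sub, hN n hn, sub_zero]
  rw [h1]
  exact (h.Wn_le n _).trans_lt (by rwa [← dist_eq_norm])

theorem tendsto_WnK (h : ShiftPair e V W) {K : H →L[ℂ] H} (hK : IsCompactOperator K) :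
    Tendsto (fun n => W ^ n * K) atTop (𝓝 0) := by
  rw [Metric.tendsto_atTop]
  intro ε hε
  obtain ⟨C, hC, hsub⟩ := hK.image_closedBall_subset_compact (f := (K : H →ₗ[ℂ] H)) 1
  obtain ⟨t, -, ht, hcov⟩ := hC.finite_cover_balls (e := ε / 3) (by positivity)
  have hev : ∀ᶠ n in atTop, ∀ y ∈ t, ‖(W ^ n) y‖ < ε / 3 := by
    rw [Filter.eventually_all_finite ht]
    intro y _
    have := (h.tendsto_Wn y).norm
    rw [norm_zero] at this
    exact this.eventually_lt_const (by positivity)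
  obtain ⟨N, hN⟩ := eventually_atTop.mp hev
  refine ⟨N, fun n hn => ?_⟩
  rw [dist_zero_right]
  have : ‖W ^ n * K‖ ≤ 2 * ε / 3 := by
    apply ContinuousLinearMap.opNorm_le_of_unit_norm (by positivity)
    intro x hx
    have hx' : K x ∈ C := hsub ⟨x, by simp [hx], rfl⟩
    obtain ⟨y, hy, hxy⟩ := Set.mem_iUnion₂.mp (hcov hx')
    have h1 : (W ^ n) (K x) = (W ^ n) (K x - y) + (W ^ n) y := by rw [← map_add]; simp
    have h2 := h.Wn_le n (K x - y)
    have h3 := hN n hn y hy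
    rw [Metric.mem_ball, dist_eq_norm] at hxy
    rw [mul_apply_eq_comp, h1]
    refine (norm_add_le _ _).trans ?_
    linarith
  linarith

theorem tendsto_WnKVn (h : ShiftPair e V W) {K : H →L[ℂ] H} (hK : IsCompactOperator K) :
    Tendsto (fun n => W ^ n * K * V ^ n) atTop (𝓝 0) := by
  refine squeeze_zero_norm (fun n => ?_) (tendsto_zero_iff_norm_tendsto_zero.mp (h.tendsto_WnK hK))
  calc ‖W ^ n * K * V ^ n‖ ≤ ‖W ^ n * K‖ * ‖V ^ n‖ := norm_mul_le _ _
    _ ≤ ‖W ^ n * K‖ * 1 := by gcongr; exact h.normVn n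
    _ = _ := mul_one _

/-- rank one operators are compact -/
theorem rank_one_compact (φ : H →L[ℂ] ℂ) (u : H) : IsCompactOperator (φ.smulRight u) := by
  have h1 : IsCompactOperator φ := by
    exact isCompactOperator_of_locallyCompactSpace_dom φ
  exact h1.clm_comp (ContinuousLinearMap.toSpanSingleton ℂ u)

theorem VW_compact (h : ShiftPair e V W) : IsCompactOperator (1 - V * W : H →L[ℂ] H) := by
  have : 1 - V * W = (innerSL ℂ (e 0)).smulRight (e 0) := by
    apply hb_op_ext e
    intro k
    rcases k with _ | k
    · have := hb_inner e 0 0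
      simp only [if_true] at this
      simp [h.W_zero, this, -inner_self_eq_norm_sq_to_K]
    · simp [h.W_succ, h.basis, hb_inner]
  rw [this]
  exact rank_one_compact _ _

theorem ker_W (h : ShiftPair e V W) {f : H} (hf : W f = 0) : f = (inner ℂ (e 0) f : ℂ) • e 0 := by
  apply hb_ext e
  intro k
  rcases k with _ | k
  · rw [inner_smul_right, hb_inner]; simp
  · rw [← h.basis, ← h.adj', hf, inner_smul_right, h.basis, hb_inner]
    simp

end ShiftPair

theorem exists_diag (e : HilbertBasis ℕ ℂ H) (c : ℕ → ℂ) (C : ℝ) (hC : ∀ k, ‖c k‖ ≤ C) :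
    ∃ D : H →L[ℂ] H, (∀ k, D (e k) = c k • e k) ∧ ‖D‖ ≤ C := by
  have hC0 : 0 ≤ C := (norm_nonneg _).trans (hC 0)
  have key : ∀ x : lp (fun _ : ℕ => ℂ) 2, ∀ k, ‖c k * x k‖ ≤ ‖((C : ℂ) • x) k‖ := by
    intro x k
    simp only [lp.coeFn_smul, Pi.smul_apply, smul_eq_mul, norm_mul, Complex.norm_real,
      Real.norm_eq_abs, abs_of_nonneg hC0]
    exact mul_le_mul_of_nonneg_right (hC k) (norm_nonneg _)
  have hmem : ∀ x : lp (fun _ : ℕ => ℂ) 2, Memℓp (fun k => c k * x k) 2 := by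
    intro x
    have h2 := (memℓp_gen_iff (p := 2) (by norm_num)).mp (lp.memℓp ((C : ℂ) • x))
    refine memℓp_gen (Summable.of_nonneg_of_le (fun k => by positivity) (fun k => ?_) h2)
    exact Real.rpow_le_rpow (norm_nonneg _) (key x k) (by norm_num)
  let L : lp (fun _ : ℕ => ℂ) 2 →ₗ[ℂ] lp (fun _ : ℕ => ℂ) 2 :=
    { toFun := fun x => ⟨fun k => c k * x k, hmem x⟩
      map_add' := fun x y => by ext k; simp [mul_add]; rfl
      map_smul' := fun a x => by ext k; simp; ring }
  have hL : ∀ x, ‖L x‖ ≤ C * ‖x‖ := by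
    intro x
    have : ‖L x‖ ≤ ‖(C : ℂ) • x‖ := lp.norm_mono (by norm_num) (key x)
    rw [norm_smul, Complex.norm_real, Real.norm_eq_abs, abs_of_nonneg hC0] at this
    exact this
  let M := L.mkContinuous C hL
  refine ⟨(e.repr.symm.toContinuousLinearEquiv : lp (fun _ : ℕ => ℂ) 2 →L[ℂ] H).comp
    (M.comp (e.repr.toContinuousLinearEquiv : H →L[ℂ] lp (fun _ : ℕ => ℂ) 2)), ?_, ?_⟩
  · intro k
    apply e.repr.injective
    simp only [ContinuousLinearMap.comp_apply]
    have : e.repr (e.repr.symm (L (e.repr (e k)))) = e.repr (c k • e k) := by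
      rw [LinearIsometryEquiv.apply_symm_apply, map_smul, HilbertBasis.repr_self]
      ext j
      simp only [L, LinearMap.coe_mk, AddHom.coe_mk, lp.coeFn_smul, Pi.smul_apply, smul_eq_mul]
      by_cases hj : j = k
      · subst hj; simp
      · simp [lp.single_apply, Pi.single_eq_of_ne hj]
    exact this
  · apply ContinuousLinearMap.opNorm_le_bound _ hC0
    intro x
    have : ‖e.repr.symm (L (e.repr x))‖ ≤ C * ‖x‖ := by
      rw [LinearIsometryEquiv.norm_map]
      simpa using hL (e.repr x)
    exact this

theorem diag_compact (e : HilbertBasis ℕ ℂ H) (c : ℕ → ℂ) (hc : Tendsto c atTop (𝓝 0)) :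
    ∃ D : H →L[ℂ] H, (∀ k, D (e k) = c k • e k) ∧ IsCompactOperator D := by
  obtain ⟨C, hC⟩ := hc.norm.bddAbove_range
  have hC' : ∀ k, ‖c k‖ ≤ C := fun k => hC ⟨k, rfl⟩
  obtain ⟨D, hD, -⟩ := exists_diag e c C hC'
  refine ⟨D, hD, ?_⟩
  let F : ℕ → (H →L[ℂ] H) := fun n =>
    ∑ k ∈ Finset.range n, (innerSL ℂ (e k)).smulRight (c k • e k)
  have hF : ∀ n j, F n (e j) = if j < n then c j • e j else 0 := by
    intro n j
    simp only [F, _root_.sum_apply, ContinuousLinearMap.smulRight_apply,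
      innerSL_apply_apply, hb_inner]
    simp
  have hFc : ∀ n, IsCompactOperator (F n) := by
    intro n
    induction n with
    | zero => simpa [F] using (isCompactOperator_zero : IsCompactOperator (0 : H → H))
    | succ n ih =>
      have : F (n + 1) = F n + (innerSL ℂ (e n)).smulRight (c n • e n) := by
        simp [F, Finset.sum_range_succ]
      rw [this]
      exact ih.add (ShiftPair.rank_one_compact _ _)
  have hlim : Tendsto F atTop (𝓝 D) := by
    rw [Metric.tendsto_atTop]
    intro ε hε
    obtain ⟨N, hN⟩ := Metric.tendsto_atTop.mp hc (ε / 2) (by positivity)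
    refine ⟨N, fun n hn => ?_⟩
    obtain ⟨E, hE, hEn⟩ := exists_diag e (fun k => if k < n then 0 else - c k) (ε / 2) (by
      intro k
      split_ifs with hk
      · simp; positivity
      · have := hN k (by omega)
        rw [dist_zero_right] at this
        rw [norm_neg]; exact this.le)
    have : F n - D = E := by
      apply hb_op_ext e
      intro k
      rw [_root_.sub_apply, hF, hD, hE]
      split_ifs <;> simp
    rw [dist_eq_norm, this]
    linarith
  exact isCompactOperator_of_tendsto hlim (Filter.Eventually.of_forall hFc)

end Abstract

/-! ### Part 2: operators that are Wiener-Hopf factorizable modulo compact operators -/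

section Factor

set_option linter.unusedSectionVars false

variable {H : Type*} [NormedAddCommGroup H] [InnerProductSpace ℂ H] [CompleteSpace H]

/-- Congruence modulo compact operators. -/
def compCon (H : Type*) [NormedAddCommGroup H] [InnerProductSpace ℂ H] [CompleteSpace H] :
    RingCon (H →L[ℂ] H) where
  r X Y := IsCompactOperator (X - Y : H →L[ℂ] H)
  iseqv :=
    { refl := fun X => by
        rw [sub_self]; exact isCompactOperator_zero
      symm := fun {X Y} h => by
        rw [← neg_sub]; exact h.neg
      trans := fun {X Y Z} h1 h2 => by
        rw [← sub_add_sub_cancel X Y Z]; exact h1.add h2 }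
  add' := fun {X Y X' Y'} h1 h2 => by
    rw [add_sub_add_comm]; exact h1.add h2
  mul' := fun {X Y X' Y'} h1 h2 => by
    have : X * X' - Y * Y' = (X - Y) * X' + Y * (X' - Y') := by noncomm_ring
    rw [this]
    exact (h1.comp_clm X').add (h2.clm_comp Y)

/-- The quotient map onto the Calkin algebra. -/
def calk : (H →L[ℂ] H) →+* (compCon H).Quotient := (compCon H).mk'

theorem calk_eq {X Y : H →L[ℂ] H} : calk X = calk Y ↔ IsCompactOperator (X - Y : H →L[ℂ] H) :=
  (compCon H).eq

theorem calk_surj (x : (compCon H).Quotient) : ∃ X : H →L[ℂ] H, calk X = x :=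
  (compCon H).mk'_surjective x

/-- The double centralizer of the shift in the Calkin algebra. -/
def zz (V : H →L[ℂ] H) : Subring (compCon H).Quotient :=
  Subring.centralizer (Subring.centralizer {calk V} : Set (compCon H).Quotient)

theorem zz_comm (V : H →L[ℂ] H) {x y : (compCon H).Quotient} (hx : x ∈ zz V) (hy : y ∈ zz V) :
    x * y = y * x := by
  have hxc : x ∈ Subring.centralizer {calk V} := by
    rw [Subring.mem_centralizer_iff]
    intro g hg
    rw [Set.mem_singleton_iff] at hg
    subst hg
    refine Subring.mem_centralizer_iff.mp hx _ ?_
    rw [SetLike.mem_coe, Subring.mem_centralizer_iff]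
    intro g hg
    rw [Set.mem_singleton_iff] at hg
    subst hg; rfl
  exact Subring.mem_centralizer_iff.mp hy x hxc

theorem zz_inv (V : H →L[ℂ] H) (F : (H →L[ℂ] H)ˣ) (hF : calk (F : H →L[ℂ] H) ∈ zz V) :
    calk ((F⁻¹ : (H →L[ℂ] H)ˣ) : H →L[ℂ] H) ∈ zz V := by
  rw [zz, Subring.mem_centralizer_iff] at hF ⊢
  intro x hx
  have h1 : Commute x (Units.map (calk : (H →L[ℂ] H) →+* _).toMonoidHom F :
      (compCon H).Quotientˣ) := hF x hx
  exact h1.units_inv_right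

theorem zz_scalar (V : H →L[ℂ] H) (k : ℂ) : calk (algebraMap ℂ (H →L[ℂ] H) k) ∈ zz V := by
  rw [zz, Subring.mem_centralizer_iff]
  intro x _
  obtain ⟨X, rfl⟩ := calk_surj x
  rw [← map_mul, ← map_mul, Algebra.commutes]

theorem zz_V (V : H →L[ℂ] H) : calk V ∈ zz V := by
  rw [zz, Subring.mem_centralizer_iff]
  intro x hx
  exact (Subring.mem_centralizer_iff.mp hx _ rfl).symm

theorem zz_W {e : HilbertBasis ℕ ℂ H} {V W : H →L[ℂ] H} (h : ShiftPair e V W) :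
    calk W ∈ zz V := by
  rw [zz, Subring.mem_centralizer_iff]
  intro x hx
  have h1 : calk V * x = x * calk V := Subring.mem_centralizer_iff.mp hx _ rfl
  have h2 : calk W * calk V = 1 := by rw [← map_mul, h.WV, map_one]
  have h3 : calk V * calk W = 1 := by
    rw [← map_mul, ← map_one calk, eq_comm, calk_eq]; exact h.VW_compact
  calc x * calk W = calk W * calk V * x * calk W := by rw [h2, one_mul]
    _ = calk W * (calk V * x) * calk W := by noncomm_ring
    _ = calk W * x * (calk V * calk W) := by rw [h1]; noncomm_ring
    _ = calk W * x := by rw [h3, mul_one]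

/-- `X` is, modulo compacts, a product of an invertible co-analytic Toeplitz operator and an
invertible analytic Toeplitz operator. -/
def Fac (V W X : H →L[ℂ] H) : Prop :=
  ∃ F G : (H →L[ℂ] H)ˣ, Commute (F : H →L[ℂ] H) V ∧ Commute (G : H →L[ℂ] H) W ∧
    calk (F : H →L[ℂ] H) ∈ zz V ∧ calk (G : H →L[ℂ] H) ∈ zz V ∧
    calk X = calk (G : H →L[ℂ] H) * calk (F : H →L[ℂ] H)

theorem Fac.one (V W : H →L[ℂ] H) : Fac V W 1 :=
  ⟨1, 1, by simp, by simp, by simp [one_mem], by simp [one_mem], by simp⟩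

theorem Fac.mul {V W X Y : H →L[ℂ] H} (hX : Fac V W X) (hY : Fac V W Y) : Fac V W (X * Y) := by
  obtain ⟨F, G, h1, h2, h3, h4, h5⟩ := hX
  obtain ⟨F', G', h1', h2', h3', h4', h5'⟩ := hY
  refine ⟨F * F', G * G', ?_, ?_, ?_, ?_, ?_⟩
  · rw [Units.val_mul]; exact h1.mul_left h1'
  · rw [Units.val_mul]; exact h2.mul_left h2'
  · rw [Units.val_mul, map_mul]; exact mul_mem h3 h3'
  · rw [Units.val_mul, map_mul]; exact mul_mem h4 h4'
  · rw [Units.val_mul, Units.val_mul, map_mul, map_mul, map_mul, h5, h5']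
    have := zz_comm V h3 h4'
    calc _ = calk (G : H →L[ℂ] H) * (calk (F : H →L[ℂ] H) * calk (G' : H →L[ℂ] H))
          * calk (F' : H →L[ℂ] H) := by noncomm_ring
      _ = _ := by rw [this]; noncomm_ring

theorem Fac.inv {V W X Y : H →L[ℂ] H} (hX : Fac V W X) (hYX : Y * X = 1) :
    Fac V W Y := by
  obtain ⟨F, G, h1, h2, h3, h4, h5⟩ := hX
  refine ⟨F⁻¹, G⁻¹, h1.units_inv_left, h2.units_inv_left, zz_inv V F h3, zz_inv V G h4, ?_⟩
  rw [zz_comm V (zz_inv V G h4) (zz_inv V F h3)]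
  have h6 : calk Y * (calk (G : H →L[ℂ] H) * calk (F : H →L[ℂ] H)) = 1 := by
    rw [← h5, ← map_mul, hYX, map_one]
  have h7 : calk (F : H →L[ℂ] H) * calk ((F⁻¹ : (H →L[ℂ] H)ˣ) : H →L[ℂ] H) = 1 := by
    rw [← map_mul, Units.mul_inv, map_one]
  have h8 : calk (G : H →L[ℂ] H) * calk ((G⁻¹ : (H →L[ℂ] H)ˣ) : H →L[ℂ] H) = 1 := by
    rw [← map_mul, Units.mul_inv, map_one]
  calc calk Y = calk Y * (calk (G : H →L[ℂ] H) *
        (calk (F : H →L[ℂ] H) * calk ((F⁻¹ : (H →L[ℂ] H)ˣ) : H →L[ℂ] H)) *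
        calk ((G⁻¹ : (H →L[ℂ] H)ˣ) : H →L[ℂ] H)) := by rw [h7, mul_one, h8, mul_one]
    _ = (calk Y * (calk (G : H →L[ℂ] H) * calk (F : H →L[ℂ] H))) *
        calk ((F⁻¹ : (H →L[ℂ] H)ˣ) : H →L[ℂ] H) *
        calk ((G⁻¹ : (H →L[ℂ] H)ˣ) : H →L[ℂ] H) := by simp only [mul_assoc]
    _ = _ := by rw [h6, one_mul]

theorem Fac.pow {V W X : H →L[ℂ] H} (hX : Fac V W X) (n : ℕ) : Fac V W (X ^ n) := by
  induction n with
  | zero => rw [pow_zero]; exact Fac.one V W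
  | succ n ih => rw [pow_succ]; exact ih.mul hX

theorem eig_of_commute {e : HilbertBasis ℕ ℂ H} {V W : H →L[ℂ] H} (h : ShiftPair e V W)
    (G : (H →L[ℂ] H)ˣ) (hG : Commute (G : H →L[ℂ] H) W) :
    ∃ k : ℂ, k ≠ 0 ∧ (G : H →L[ℂ] H) (e 0) = k • e 0 := by
  have h1 : W ((G : H →L[ℂ] H) (e 0)) = 0 := by
    have := congrArg (fun T : H →L[ℂ] H => T (e 0)) hG.eq
    simp only [mul_apply_eq_comp] at this
    rw [← this, h.W_zero, map_zero]
  refine ⟨_, ?_, h.ker_W h1⟩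
  intro h0
  have h2 := h.ker_W h1
  rw [h0, zero_smul] at h2
  have h3 : ((G⁻¹ : (H →L[ℂ] H)ˣ) : H →L[ℂ] H) ((G : H →L[ℂ] H) (e 0)) = e 0 := by
    rw [← mul_apply_eq_comp, Units.inv_mul]; rfl
  rw [h2, map_zero] at h3
  have := hb_inner e 0 0
  rw [← h3] at this
  simp at this

theorem Fac.tendsto {e : HilbertBasis ℕ ℂ H} {V W X : H →L[ℂ] H} (h : ShiftPair e V W)
    (hX : Fac V W X) : ∃ Y : (H →L[ℂ] H)ˣ,
      Tendsto (fun n => W ^ n * X * V ^ n) atTop (𝓝 (Y : H →L[ℂ] H)) ∧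
      inner ℂ (e 0) (((Y⁻¹ : (H →L[ℂ] H)ˣ) : H →L[ℂ] H) (e 0)) ≠ (0 : ℂ) := by
  obtain ⟨F, G, h1, h2, h3, h4, h5⟩ := hX
  refine ⟨G * F, ?_, ?_⟩
  · rw [← map_mul, calk_eq] at h5
    have := h.tendsto_WnKVn h5
    have h6 : (fun n => W ^ n * X * V ^ n) = fun n =>
        W ^ n * (X - (G : H →L[ℂ] H) * F) * V ^ n + ((G * F : (H →L[ℂ] H)ˣ) : H →L[ℂ] H) := by
      funext n
      have h7 : W ^ n * ((G : H →L[ℂ] H) * F) * V ^ n = (G : H →L[ℂ] H) * F := by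
        calc _ = (W ^ n * (G : H →L[ℂ] H)) * (F * V ^ n) := by simp only [mul_assoc]
          _ = G * (W ^ n * V ^ n) * F := by
            rw [← (h2.pow_right n).eq, (h1.pow_right n).eq]; simp only [mul_assoc]
          _ = _ := by rw [h.WVn, mul_one]
      rw [mul_sub, sub_mul, h7, Units.val_mul]; abel
    rw [h6]
    simpa using this.add_const ((G * F : (H →L[ℂ] H)ˣ) : H →L[ℂ] H)
  · obtain ⟨k, hk, hk'⟩ := eig_of_commute h G⁻¹ h2.units_inv_left
    rw [mul_inv_rev, Units.val_mul, mul_apply_eq_comp, hk', map_smul, inner_smul_right]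
    refine mul_ne_zero hk ?_
    intro h0
    -- the vector `F⁻¹ e₀` is in the range of `V`
    set f := ((F⁻¹ : (H →L[ℂ] H)ˣ) : H →L[ℂ] H) (e 0) with hf
    have h8 : V (W f) = f := by
      have := h.VWn_of 1 f (by
        intro k hk
        obtain rfl : k = 0 := by omega
        exact h0)
      simpa using this
    have h9 : (F : H →L[ℂ] H) f = e 0 := by
      rw [hf, ← mul_apply_eq_comp, Units.mul_inv]; rfl
    have h10 : (F : H →L[ℂ] H) f = V ((F : H →L[ℂ] H) (W f)) := by
      have := congrArg (fun T : H →L[ℂ] H => T (W f)) h1.eq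
      simp only [mul_apply_eq_comp] at this
      rw [← this, h8]
    have h11 := h.W_zero
    rw [← h9, h10] at h11
    have h12 : W (V ((F : H →L[ℂ] H) (W f))) = (F : H →L[ℂ] H) (W f) := by
      rw [← mul_apply_eq_comp, h.WV]; rfl
    rw [h12] at h11
    rw [h11, map_zero] at h10
    rw [h10] at h9
    have := hb_inner e 0 0
    rw [← h9] at this
    simp at this

theorem unit_one_sub {T : H →L[ℂ] H} (hT : ‖T‖ ≤ 1) {w : ℂ} (hw : ‖w‖ < 1) :
    ∃ F : (H →L[ℂ] H)ˣ, (F : H →L[ℂ] H) = 1 - algebraMap ℂ (H →L[ℂ] H) w * T := by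
  refine ⟨Units.oneSub _ ?_, Units.val_oneSub _ _⟩
  rw [← Algebra.smul_def, norm_smul]
  calc ‖w‖ * ‖T‖ ≤ ‖w‖ * 1 := by gcongr
    _ < 1 := by simpa using hw

theorem joukowski_factor {e : HilbertBasis ℕ ℂ H} {V W : H →L[ℂ] H} (h : ShiftPair e V W)
    {w c : ℂ} (hw0 : w ≠ 0) (hwc : w ^ 2 + 1 = 2 * c * w) :
    (2⁻¹ : ℂ) • (V + W) - algebraMap ℂ (H →L[ℂ] H) c =
      (algebraMap ℂ (H →L[ℂ] H) (-(2 * w)⁻¹) * (1 - algebraMap ℂ (H →L[ℂ] H) w * W)) *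
        (1 - algebraMap ℂ (H →L[ℂ] H) w * V) := by
  have hc : c = (w ^ 2 + 1) * (2 * w)⁻¹ := by field_simp; linear_combination -hwc
  have : (1 - algebraMap ℂ (H →L[ℂ] H) w * W) * (1 - algebraMap ℂ (H →L[ℂ] H) w * V) =
      (w ^ 2 + 1) • (1 : H →L[ℂ] H) - w • (V + W) := by
    simp only [← Algebra.smul_def, sub_mul, mul_sub, one_mul, mul_one, smul_mul_smul_comm, h.WV]
    rw [add_smul, smul_add, pow_two, one_smul]
    abel
  rw [mul_assoc, this, ← Algebra.smul_def, hc, Algebra.algebraMap_eq_smul_one, smul_sub,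
    smul_smul, smul_smul]
  have e1 : -(2 * w)⁻¹ * w = -(2⁻¹ : ℂ) := by field_simp
  rw [e1, neg_mul, mul_comm, neg_smul, neg_smul]
  abel

/-- Exclusion of the interval: `J - c` invertible forces `|w| ≠ 1`. -/
theorem joukowski_ne_one {e : HilbertBasis ℕ ℂ H} {V W J Y : H →L[ℂ] H} (h : ShiftPair e V W)
    (hJ : IsCompactOperator (J - (2⁻¹ : ℂ) • (V + W) : H →L[ℂ] H))
    {w c : ℂ} (hw0 : w ≠ 0) (hwc : w ^ 2 + 1 = 2 * c * w)
    (hY : (J - algebraMap ℂ (H →L[ℂ] H) c) * Y = 1) : ‖w‖ ≠ 1 := by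
  intro hw1
  set F : H →L[ℂ] H := 1 - algebraMap ℂ (H →L[ℂ] H) w * V with hF
  set G : H →L[ℂ] H := 1 - algebraMap ℂ (H →L[ℂ] H) w * W with hG
  set s := algebraMap ℂ (H →L[ℂ] H) (-(2 * w)⁻¹) with hs
  have hfac : (2⁻¹ : ℂ) • (V + W) - algebraMap ℂ (H →L[ℂ] H) c = (s * G) * F :=
    joukowski_factor h hw0 hwc
  -- `G * (s * F * Y) = 1 + compact`
  have hcomp : IsCompactOperator (1 - G * (s * F * Y) : H →L[ℂ] H) := by
    have : (1 - G * (s * F * Y) : H →L[ℂ] H) = (J - (2⁻¹ : ℂ) • (V + W)) * Y := by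
      have e1 : G * (s * F * Y) = (s * G * F) * Y := by
        have hsG : s * G = G * s := Algebra.commutes _ _
        rw [hsG]; simp only [mul_assoc]
      rw [e1, ← hfac, ← hY]
      noncomm_ring
    rw [this]
    exact hJ.comp_clm Y
  have ht := h.tendsto_WnKVn hcomp
  obtain ⟨n, hn⟩ := ((tendsto_zero_iff_norm_tendsto_zero.mp ht).eventually_lt_const
    (zero_lt_one)).exists
  have hcomm : Commute G W := by
    rw [hG]
    apply Commute.sub_left (Commute.one_left _)
    exact (Algebra.commute_algebraMap_left w W).mul_left (Commute.refl W)
  have hexp : W ^ n * (1 - G * (s * F * Y)) * V ^ n = 1 - G * (W ^ n * (s * F * Y) * V ^ n) := by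
    rw [mul_sub, sub_mul, mul_one, h.WVn]
    congr 1
    simp only [← mul_assoc]
    rw [(hcomm.pow_right n).eq]
  rw [hexp] at hn
  -- right inverse of G
  let U := Units.oneSub _ hn
  have hU : (U : H →L[ℂ] H) = G * (W ^ n * (s * F * Y) * V ^ n) := by
    rw [Units.val_oneSub]; abel
  set Z := (W ^ n * (s * F * Y) * V ^ n) * ((U⁻¹ : (H →L[ℂ] H)ˣ) : H →L[ℂ] H) with hZ
  have hGZ : G * Z = 1 := by
    rw [hZ, ← mul_assoc, ← hU, Units.mul_inv]
  -- test vectors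
  let u := (starRingEnd ℂ) w
  have hu : ‖u‖ = 1 := by simp [u, hw1]
  let f : ℕ → H := fun N => ∑ k ∈ Finset.range N, (u ^ k) • e k
  have hadj : ∀ x y : H, inner ℂ (x - u • V x) y = inner ℂ x (G y) := by
    intro x y
    rw [hG, ← Algebra.smul_def, _root_.sub_apply, inner_sub_left, inner_sub_right, inner_smul_left]
    simp [u, inner_smul_right, h.adj']
  have htel : ∀ N, f N - u • V (f N) = e 0 - u ^ N • e N := by
    intro N
    induction N with
    | zero => simp [f]
    | succ N ih =>
      have : f (N + 1) = f N + u ^ N • e N := by simp [f, Finset.sum_range_succ]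
      rw [this, map_add, map_smul, h.basis, smul_add, smul_smul, ← pow_succ']
      calc _ = (f N - u • V (f N)) + u ^ N • e N - u ^ (N + 1) • e (N + 1) := by abel
        _ = _ := by rw [ih]; abel
  have hnorm : ∀ N, ‖f N‖ ^ 2 = N := by
    intro N
    have h1 : inner ℂ (f N) (f N) = ((N : ℝ) : ℂ) := by
      simp only [f]
      rw [e.orthonormal.inner_sum]
      have : ∀ k ∈ Finset.range N, (starRingEnd ℂ) (u ^ k) * u ^ k = 1 := by
        intro k _
        rw [← Complex.normSq_eq_conj_mul_self, Complex.normSq_eq_norm_sq, norm_pow, hu]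
        simp
      rw [Finset.sum_congr rfl this]; simp
    rw [inner_self_eq_norm_sq_to_K] at h1
    have h2 : ((‖f N‖ ^ 2 : ℝ) : ℂ) = ((N : ℝ) : ℂ) := by
      rw [Complex.ofReal_pow]; exact h1
    exact Complex.ofReal_injective h2
  have hen : ∀ k, ‖e k‖ = 1 := e.orthonormal.1
  have hbound : ∀ N, ‖f N‖ ^ 2 ≤ 2 * (‖Z‖ * ‖f N‖) := by
    intro N
    have h1 : inner ℂ (f N) (f N) = inner ℂ (e 0 - u ^ N • e N) (Z (f N)) := by
      rw [← htel, hadj, ← mul_apply_eq_comp G Z, hGZ]; rfl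
    have h2 : ‖e 0 - u ^ N • e N‖ ≤ 2 := by
      refine (norm_sub_le _ _).trans ?_
      rw [norm_smul, norm_pow, hu, hen, hen]; norm_num
    have h3 : ‖inner ℂ (f N) (f N)‖ = ‖f N‖ ^ 2 := by
      rw [inner_self_eq_norm_sq_to_K]; simp
    rw [← h3, h1]
    refine (norm_inner_le_norm _ _).trans ?_
    exact mul_le_mul h2 (Z.le_opNorm _) (norm_nonneg _) (by norm_num)
  have hb2 : ∀ N : ℕ, (N : ℝ) ≤ 4 * ‖Z‖ ^ 2 := by
    intro N
    have h1 := hbound N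
    have h2 := hnorm N
    have h3 := norm_nonneg (f N)
    have h4 := norm_nonneg Z
    rw [← h2]
    have h5 : ‖f N‖ ≤ 2 * ‖Z‖ := by
      by_contra hcon
      push Not at hcon
      nlinarith
    nlinarith
  obtain ⟨N, hN⟩ := exists_nat_gt (4 * ‖Z‖ ^ 2)
  linarith [hb2 N]

theorem exists_joukowski (c : ℂ) : ∃ w : ℂ, w ≠ 0 ∧ ‖w‖ ≤ 1 ∧ w ^ 2 + 1 = 2 * c * w := by
  obtain ⟨s, hs⟩ := IsAlgClosed.exists_pow_nat_eq (c ^ 2 - 1) (n := 2) (by norm_num)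
  have hprod : (c + s) * (c - s) = 1 := by linear_combination -hs
  have h1 : c + s ≠ 0 := left_ne_zero_of_mul_eq_one hprod
  have h2 : c - s ≠ 0 := right_ne_zero_of_mul_eq_one hprod
  by_cases hle : ‖c + s‖ ≤ 1
  · exact ⟨c + s, h1, hle, by linear_combination hs⟩
  · refine ⟨c - s, h2, ?_, by linear_combination hs⟩
    have := congrArg norm hprod
    rw [norm_mul, norm_one] at this
    push Not at hle
    nlinarith [norm_nonneg (c - s)]

theorem Fac.base {e : HilbertBasis ℕ ℂ H} {V W J Y : H →L[ℂ] H} (h : ShiftPair e V W)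
    (hJ : IsCompactOperator (J - (2⁻¹ : ℂ) • (V + W) : H →L[ℂ] H))
    {c : ℂ} (hY : (J - algebraMap ℂ (H →L[ℂ] H) c) * Y = 1) :
    Fac V W (J - algebraMap ℂ (H →L[ℂ] H) c) := by
  obtain ⟨w, hw0, hw1, hwc⟩ := exists_joukowski c
  have hw : ‖w‖ < 1 := lt_of_le_of_ne hw1 (joukowski_ne_one h hJ hw0 hwc hY)
  obtain ⟨F, hF⟩ := unit_one_sub h.normV hw
  obtain ⟨G, hG⟩ := unit_one_sub h.normW hw
  have hk : -(2 * w)⁻¹ ≠ 0 := by simp [hw0]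
  let s : (H →L[ℂ] H)ˣ := Units.map (algebraMap ℂ (H →L[ℂ] H)).toMonoidHom (Units.mk0 _ hk)
  have hs : (s : H →L[ℂ] H) = algebraMap ℂ (H →L[ℂ] H) (-(2 * w)⁻¹) := rfl
  refine ⟨F, s * G, ?_, ?_, ?_, ?_, ?_⟩
  · rw [hF]
    apply Commute.sub_left (Commute.one_left _)
    exact (Algebra.commute_algebraMap_left w V).mul_left (Commute.refl V)
  · rw [Units.val_mul, hs, hG]
    apply (Algebra.commute_algebraMap_left _ W).mul_left
    apply Commute.sub_left (Commute.one_left _)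
    exact (Algebra.commute_algebraMap_left w W).mul_left (Commute.refl W)
  · rw [hF, map_sub, map_one, map_mul]
    exact sub_mem (one_mem _) (mul_mem (zz_scalar V w) (zz_V V))
  · rw [Units.val_mul, hs, hG, map_mul, map_sub, map_one, map_mul]
    exact mul_mem (zz_scalar V _) (sub_mem (one_mem _) (mul_mem (zz_scalar V w) (zz_W h)))
  · rw [← map_mul, calk_eq, Units.val_mul, hs, hG, hF, ← joukowski_factor h hw0 hwc,
      sub_sub_sub_cancel_right]
    exact hJ

end Factor

/-! ### Part 3: multiplication operators on `L²(μ)` and the polynomial basis -/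

section MulOp

set_option linter.unusedSectionVars false

variable {μ : Measure ℝ}

/-- `X` is multiplication by `m` on `L²(μ)`. -/
def IsMul (μ : Measure ℝ) (X : Lp ℂ 2 μ →L[ℂ] Lp ℂ 2 μ) (m : ℝ → ℂ) : Prop :=
  ∀ f : Lp ℂ 2 μ, X f =ᵐ[μ] fun x => m x * f x

theorem exists_isMul {m : ℝ → ℂ} (hm : AEStronglyMeasurable m μ) (C : ℝ)
    (hC : ∀ᵐ x ∂μ, ‖m x‖ ≤ C) : ∃ X, IsMul μ X m := by
  have h1 : MemLp m ⊤ μ := memLp_top_of_bound hm C hC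
  refine ⟨(ContinuousLinearMap.mul ℂ ℂ).holderL μ ⊤ 2 2 (h1.toLp m), fun f => ?_⟩
  have h2 := (ContinuousLinearMap.mul ℂ ℂ).coeFn_holder (r := 2) (h1.toLp m) f
  filter_upwards [h2, h1.coeFn_toLp] with x hx hx'
  have : ((ContinuousLinearMap.mul ℂ ℂ).holderL μ ⊤ 2 2 (h1.toLp m)) f =
    (ContinuousLinearMap.mul ℂ ℂ).holder 2 (h1.toLp m) f := rfl
  rw [this, hx, hx']
  rfl

theorem IsMul.mul {X Y : Lp ℂ 2 μ →L[ℂ] Lp ℂ 2 μ} {m k : ℝ → ℂ} (hX : IsMul μ X m)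
    (hY : IsMul μ Y k) : IsMul μ (X * Y) (fun x => m x * k x) := by
  intro f
  have h1 := hX (Y f)
  filter_upwards [h1, hY f] with x hx hx'
  rw [mul_apply_eq_comp, hx, hx', mul_assoc]

theorem IsMul.unique {X Y : Lp ℂ 2 μ →L[ℂ] Lp ℂ 2 μ} {m k : ℝ → ℂ} (hX : IsMul μ X m)
    (hY : IsMul μ Y k) (hmk : ∀ᵐ x ∂μ, m x = k x) : X = Y := by
  ext1 f
  apply Lp.ext
  filter_upwards [hX f, hY f, hmk] with x h1 h2 h3
  rw [h1, h2, h3]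

theorem IsMul.one : IsMul μ 1 (fun _ => 1) := by
  intro f
  simp

theorem IsMul.sub_const {X : Lp ℂ 2 μ →L[ℂ] Lp ℂ 2 μ} {m : ℝ → ℂ} (hX : IsMul μ X m) (c : ℂ) :
    IsMul μ (X - algebraMap ℂ _ c) (fun x => m x - c) := by
  intro f
  have h1 : (X - algebraMap ℂ (Lp ℂ 2 μ →L[ℂ] Lp ℂ 2 μ) c) f = X f - c • f := by
    rw [Algebra.algebraMap_eq_smul_one]; simp
  rw [h1]
  filter_upwards [hX f, Lp.coeFn_sub (X f) (c • f), Lp.coeFn_smul c f] with x h1 h2 h3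
  rw [h2, Pi.sub_apply, h1, h3, Pi.smul_apply, smul_eq_mul, sub_mul]

theorem msupp_eq (μ : Measure ℝ) : msupp μ = μ.support := by
  ext x
  rw [Measure.mem_support_iff_forall]
  simp [msupp, pos_iff_ne_zero]

theorem ae_mem_msupp (μ : Measure ℝ) : ∀ᵐ x ∂μ, x ∈ msupp μ := by
  rw [msupp_eq]; exact Measure.support_mem_ae

theorem ae_bdd (hcompact : IsCompact (msupp μ)) : ∃ M : ℝ, ∀ᵐ x ∂μ, |x| ≤ M := by
  obtain ⟨M, hM⟩ := hcompact.isBounded.exists_norm_le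
  exact ⟨M, (ae_mem_msupp μ).mono fun x hx => hM x hx⟩

theorem ae_far (hcompact : IsCompact (msupp μ)) {c : ℂ} (hc : c ∉ msuppC μ) :
    ∃ δ : ℝ, 0 < δ ∧ ∀ᵐ x : ℝ ∂μ, δ ≤ ‖(x : ℂ) - c‖ := by
  have h1 : IsClosed (msuppC μ) := (hcompact.image Complex.continuous_ofReal).isClosed
  obtain ⟨δ, hδ, h2⟩ := Metric.isOpen_iff.mp h1.isOpen_compl c hc
  refine ⟨δ, hδ, (ae_mem_msupp μ).mono fun x hx => ?_⟩
  by_contra hcon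
  push Not at hcon
  exact h2 (by rw [Metric.mem_ball, dist_eq_norm]; exact hcon) ⟨x, hx, rfl⟩

variable [IsFiniteMeasure μ]

theorem memLp_poly (hbd : ∃ M : ℝ, ∀ᵐ x ∂μ, |x| ≤ M) (p : ℂ[X]) :
    MemLp (fun x : ℝ => p.eval (x : ℂ)) 2 μ := by
  obtain ⟨M, hM⟩ := hbd
  have hcont : Continuous (fun x : ℝ => p.eval (x : ℂ)) :=
    p.continuous.comp Complex.continuous_ofReal
  obtain ⟨C, hC⟩ := (isCompact_Icc (a := -M) (b := M)).exists_bound_of_continuousOn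
    hcont.continuousOn
  refine MemLp.of_bound hcont.aestronglyMeasurable C (hM.mono fun x hx => hC x ?_)
  rw [Set.mem_Icc]; exact abs_le.mp hx

/-- Polynomials as elements of `L²(μ)`. -/
noncomputable def peL (hbd : ∃ M : ℝ, ∀ᵐ x ∂μ, |x| ≤ M) : ℂ[X] →ₗ[ℂ] Lp ℂ 2 μ where
  toFun p := (memLp_poly hbd p).toLp _
  map_add' p q := by
    rw [← MemLp.toLp_add]
    apply MemLp.toLp_congr
    filter_upwards with x
    simp
  map_smul' a p := by
    rw [RingHom.id_apply, ← MemLp.toLp_const_smul]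
    apply MemLp.toLp_congr
    filter_upwards with x
    simp

theorem peL_coe (hbd : ∃ M : ℝ, ∀ᵐ x ∂μ, |x| ≤ M) (p : ℂ[X]) :
    peL hbd p =ᵐ[μ] fun x => p.eval (x : ℂ) :=
  MemLp.coeFn_toLp (memLp_poly hbd p)

theorem IsMul.peL (hbd : ∃ M : ℝ, ∀ᵐ x ∂μ, |x| ≤ M) {J : Lp ℂ 2 μ →L[ℂ] Lp ℂ 2 μ}
    (hJ : IsMul μ J (fun x => (x : ℂ))) (p : ℂ[X]) : J (peL hbd p) = _root_.peL hbd (X * p) := by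
  apply Lp.ext
  filter_upwards [hJ (_root_.peL hbd p), peL_coe hbd p, peL_coe hbd (X * p)] with x h1 h2 h3
  rw [h1, h2, h3]; simp

/-- complexified real polynomial -/
noncomputable def cx (p : ℝ[X]) : ℂ[X] := p.map Complex.ofRealHom

theorem cx_eval (p : ℝ[X]) (x : ℝ) : (cx p).eval (x : ℂ) = ((p.eval x : ℝ) : ℂ) := by
  have := Polynomial.eval_map_apply (f := Complex.ofRealHom) (p := p) x
  simpa [cx] using this

theorem inner_cx (hbd : ∃ M : ℝ, ∀ᵐ x ∂μ, |x| ≤ M) (p : ℝ[X]) (f : Lp ℂ 2 μ) :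
    inner ℂ (peL hbd (cx p)) f = ∫ x, (cx p).eval (x : ℂ) * f x ∂μ := by
  rw [L2.inner_def]
  apply integral_congr_ae
  filter_upwards [peL_coe hbd (cx p)] with x hx
  rw [hx, RCLike.inner_apply, cx_eval, Complex.conj_ofReal, mul_comm]

variable {l : ℕ → ℝ[X]}

theorem mem_span_cx (hl : IsOrthonormalPolys μ l) (n : ℕ) (p : ℂ[X]) (hp : p.degree < n) :
    p ∈ Submodule.span ℂ ((fun k => cx (l k)) '' Set.Iio n) := by
  induction n generalizing p with
  | zero =>
    have : p = 0 := by
      rw [← Polynomial.degree_eq_bot]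
      rcases hd : p.degree with _ | k
      · rfl
      · rw [hd] at hp
        exact absurd hp (by
          intro h'
          have : ((k : ℕ) : WithBot ℕ) < ((0 : ℕ) : WithBot ℕ) := h'
          exact absurd (WithBot.coe_lt_coe.mp this) (Nat.not_lt_zero k))
    rw [this]; exact zero_mem _
  | succ n ih =>
    have hlead : (l n).coeff n ≠ 0 := by
      have := (hl.leadingCoeff_pos n).ne'
      rwa [Polynomial.leadingCoeff, hl.natDegree_eq] at this
    set k : ℂ := p.coeff n / ((l n).coeff n : ℂ) with hk
    have hq : (p - k • cx (l n)).degree < n := by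
      rw [Polynomial.degree_lt_iff_coeff_zero]
      intro m hm
      rcases hm.eq_or_lt with rfl | hm
      · simp [cx, hk, hlead]
      · have h1 : p.coeff m = 0 := Polynomial.coeff_eq_zero_of_degree_lt
          (hp.trans_le (by exact_mod_cast hm))
        have h2 : (l n).coeff m = 0 := Polynomial.coeff_eq_zero_of_natDegree_lt
          (by rw [hl.natDegree_eq]; exact hm)
        simp [cx, h1, h2]
    have h1 := ih _ hq
    have h2 : p = (p - k • cx (l n)) + k • cx (l n) := by abel
    rw [h2]
    refine add_mem (Submodule.span_mono (Set.image_mono ?_) h1)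
      (Submodule.smul_mem _ _ (Submodule.subset_span ⟨n, ?_, rfl⟩))
    · exact Set.Iio_subset_Iio (Nat.le_succ n)
    · exact Nat.lt_succ_self n

theorem inner_cx_cx (hbd : ∃ M : ℝ, ∀ᵐ x ∂μ, |x| ≤ M) (hl : IsOrthonormalPolys μ l) (i j : ℕ) :
    inner ℂ (peL hbd (cx (l i))) (peL hbd (cx (l j))) = if i = j then (1 : ℂ) else 0 := by
  rw [inner_cx]
  have h1 : ∫ x, (cx (l i)).eval (x : ℂ) * (peL hbd (cx (l j))) x ∂μ =
      ∫ x, (((l i).eval x * (l j).eval x : ℝ) : ℂ) ∂μ := by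
    apply integral_congr_ae
    filter_upwards [peL_coe hbd (cx (l j))] with x hx
    rw [hx, cx_eval, cx_eval]; push_cast; rfl
  rw [h1, integral_complex_ofReal, hl.orthonormal]
  split_ifs <;> simp

theorem poly_complete (hbd : ∃ M : ℝ, ∀ᵐ x ∂μ, |x| ≤ M) (hl : IsOrthonormalPolys μ l)
    (f : Lp ℂ 2 μ) (hf : ∀ k, inner ℂ (peL hbd (cx (l k))) f = (0 : ℂ)) : f = 0 := by
  have hp : ∀ p : ℂ[X], inner ℂ f (peL hbd p) = (0 : ℂ) := by
    intro p
    obtain ⟨n, h1⟩ : ∃ n : ℕ, p ∈ Submodule.span ℂ ((fun k => cx (l k)) '' Set.Iio n) :=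
      ⟨_, mem_span_cx hl (p.natDegree + 1) p
        (Polynomial.degree_le_natDegree.trans_lt (by exact_mod_cast Nat.lt_succ_self _))⟩
    induction h1 using Submodule.span_induction with
    | mem x hx =>
      obtain ⟨k, _, rfl⟩ := hx
      rw [← inner_conj_symm, hf k, map_zero]
    | zero => simp
    | add x y _ _ hx hy => rw [map_add, inner_add_right, hx, hy, add_zero]
    | smul a x _ hx => rw [map_smul, inner_smul_right, hx, mul_zero]
  have hIntg : Integrable f μ := (Lp.memLp f).integrable (by norm_num)
  rw [Lp.eq_zero_iff_ae_eq_zero]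
  apply ae_eq_zero_of_integral_contDiff_smul_eq_zero hIntg.locallyIntegrable
  intro g hg _
  obtain ⟨M, hM⟩ := id hbd
  have hgc : Continuous g := hg.continuous
  set I := ∫ x, ‖f x‖ ∂μ with hI
  have hI0 : 0 ≤ I := integral_nonneg fun x => norm_nonneg _
  have key : ∀ ε > 0, ‖∫ x, g x • f x ∂μ‖ ≤ ε * I := by
    intro ε hε
    obtain ⟨p, hpε⟩ := exists_polynomial_near_of_continuousOn (-M) M g hgc.continuousOn ε hε
    have h0 : ∫ x : ℝ, (cx p).eval (x : ℂ) * f x ∂μ = 0 := by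
      rw [← inner_cx hbd, ← inner_conj_symm, hp, map_zero]
    have hi1 : Integrable (fun x : ℝ => (cx p).eval (x : ℂ) * f x) μ := by
      have := (memLp_poly hbd (cx p)).integrable_mul (Lp.memLp f)
      exact this
    have hi2 : Integrable (fun x => (g x - p.eval x) • f x) μ := by
      refine Integrable.mono' (hIntg.norm.const_mul ε) ?_ ?_
      · exact ((hgc.sub p.continuous).aestronglyMeasurable).smul hIntg.aestronglyMeasurable
      · filter_upwards [hM] with x hx
        rw [norm_smul, Real.norm_eq_abs, abs_sub_comm]
        exact mul_le_mul_of_nonneg_right (hpε x (abs_le.mp hx)).le (norm_nonneg _)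
    have h2 : ∫ x, g x • f x ∂μ = ∫ x, (g x - p.eval x) • f x ∂μ := by
      have h3 := integral_add hi2 hi1
      rw [h0, add_zero] at h3
      rw [← h3]
      apply integral_congr_ae
      filter_upwards with x
      rw [cx_eval, Complex.real_smul, Complex.real_smul]
      push_cast; ring
    rw [h2, hI, ← integral_const_mul]
    apply norm_integral_le_of_norm_le (hIntg.norm.const_mul ε)
    filter_upwards [hM] with x hx
    rw [norm_smul, Real.norm_eq_abs, abs_sub_comm]
    exact mul_le_mul_of_nonneg_right (hpε x (abs_le.mp hx)).le (norm_nonneg _)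
  rw [← norm_le_zero_iff]
  apply le_of_forall_pos_le_add
  intro ε hε
  have h1 := key (ε / (I + 1)) (by positivity)
  rw [zero_add]
  refine h1.trans ?_
  rw [div_mul_eq_mul_div, div_le_iff₀ (by positivity)]
  nlinarith

theorem exists_basis (hbd : ∃ M : ℝ, ∀ᵐ x ∂μ, |x| ≤ M) (hl : IsOrthonormalPolys μ l) :
    ∃ e : HilbertBasis ℕ ℂ (Lp ℂ 2 μ), ∀ k, e k = peL hbd (cx (l k)) := by
  have ho : Orthonormal ℂ (fun k => peL hbd (cx (l k))) := by
    rw [orthonormal_iff_ite]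
    exact inner_cx_cx hbd hl
  have hbot : (Submodule.span ℂ (Set.range fun k => peL hbd (cx (l k))))ᗮ = ⊥ := by
    rw [Submodule.eq_bot_iff]
    intro f hf
    apply poly_complete hbd hl f
    intro k
    exact (Submodule.mem_orthogonal _ _).mp hf _ (Submodule.subset_span ⟨k, rfl⟩)
  refine ⟨HilbertBasis.mkOfOrthogonalEqBot ho hbot, fun k => ?_⟩
  rw [HilbertBasis.coe_mkOfOrthogonalEqBot]

theorem cx_recurrence {a b : ℕ → ℝ} (hbd : ∃ M : ℝ, ∀ᵐ x ∂μ, |x| ≤ M) (hM : IsM01 μ l a b) (n : ℕ) :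
    peL hbd (X * cx (l (n + 1))) = (a (n + 2) : ℂ) • peL hbd (cx (l (n + 2))) +
      (b (n + 1) : ℂ) • peL hbd (cx (l (n + 1))) + (a (n + 1) : ℂ) • peL hbd (cx (l n)) := by
  have h1 := congrArg cx (hM.recurrence n)
  rw [← map_smul, ← map_smul, ← map_smul, ← map_add, ← map_add]
  congr 1
  simpa [cx, Polynomial.map_add, Polynomial.map_smul] using h1

theorem cx_recurrence_zero {a b : ℕ → ℝ} (hbd : ∃ M : ℝ, ∀ᵐ x ∂μ, |x| ≤ M) (hM : IsM01 μ l a b) :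
    peL hbd (X * cx (l 0)) = (a 1 : ℂ) • peL hbd (cx (l 1)) +
      (b 0 : ℂ) • peL hbd (cx (l 0)) := by
  have h1 := congrArg cx hM.recurrence_zero
  rw [← map_smul, ← map_smul, ← map_add]
  congr 1
  simpa [cx, Polynomial.map_add, Polynomial.map_smul] using h1

theorem J_compact {a b : ℕ → ℝ} (hbd : ∃ M : ℝ, ∀ᵐ x ∂μ, |x| ≤ M) (hM : IsM01 μ l a b)
    {e : HilbertBasis ℕ ℂ (Lp ℂ 2 μ)} (he : ∀ k, e k = peL hbd (cx (l k)))
    {V W J : Lp ℂ 2 μ →L[ℂ] Lp ℂ 2 μ} (h : ShiftPair e V W)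
    (hJ : IsMul μ J (fun x => (x : ℂ))) :
    IsCompactOperator (J - (2⁻¹ : ℂ) • (V + W) : Lp ℂ 2 μ →L[ℂ] Lp ℂ 2 μ) := by
  have ha : Tendsto (fun k => (a (k + 1) : ℂ) - 2⁻¹) atTop (𝓝 0) := by
    have h1 := (tendsto_add_atTop_iff_nat 1).mpr hM.tendsto_a
    have h2 := (Complex.continuous_ofReal.tendsto _).comp h1
    have h3 := h2.sub_const (2⁻¹ : ℂ)
    simpa using h3
  have hb : Tendsto (fun k => (b k : ℂ)) atTop (𝓝 0) := by
    have h2 := (Complex.continuous_ofReal.tendsto _).comp hM.tendsto_b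
    simpa [Function.comp_def] using h2
  obtain ⟨D, hD, hDc⟩ := diag_compact e _ ha
  obtain ⟨E, hE, hEc⟩ := diag_compact e _ hb
  have : J - (2⁻¹ : ℂ) • (V + W) = V * D + E + D * W := by
    apply hb_op_ext e
    intro k
    rcases k with _ | k
    · simp only [_root_.sub_apply, _root_.add_apply, _root_.smul_apply, mul_apply_eq_comp,
        h.W_zero, h.basis, hD, hE, map_smul, map_zero]
      rw [he 0, hJ.peL hbd, cx_recurrence_zero hbd hM, ← he, ← he]
      module
    · simp only [_root_.sub_apply, _root_.add_apply, _root_.smul_apply, mul_apply_eq_comp,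
        h.W_succ, h.basis, hD, hE, map_smul]
      rw [he (k + 1), hJ.peL hbd, cx_recurrence hbd hM, ← he, ← he, ← he]
      module
  rw [this]
  exact ((hDc.clm_comp V).add hEc).add (hDc.comp_clm W)

/-- multiplication by `m` is a factorizable operator -/
def FacM (V W : Lp ℂ 2 μ →L[ℂ] Lp ℂ 2 μ) (m : ℝ → ℂ) : Prop :=
  ∃ Z, IsMul μ Z m ∧ Fac V W Z

theorem FacM.mul {V W : Lp ℂ 2 μ →L[ℂ] Lp ℂ 2 μ} {m k : ℝ → ℂ} (hm : FacM V W m)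
    (hk : FacM V W k) : FacM V W (fun x => m x * k x) := by
  obtain ⟨Z, h1, h2⟩ := hm
  obtain ⟨Z', h1', h2'⟩ := hk
  exact ⟨Z * Z', h1.mul h1', h2.mul h2'⟩

theorem FacM.one (V W : Lp ℂ 2 μ →L[ℂ] Lp ℂ 2 μ) : FacM V W (fun _ => 1) :=
  ⟨1, IsMul.one, Fac.one V W⟩

theorem FacM.pow {V W : Lp ℂ 2 μ →L[ℂ] Lp ℂ 2 μ} {m : ℝ → ℂ} (hm : FacM V W m) (n : ℕ) :
    FacM V W (fun x => m x ^ n) := by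
  induction n with
  | zero => simpa using FacM.one V W
  | succ n ih => simpa [pow_succ] using ih.mul hm

theorem FacM.prod {ι : Type*} {V W : Lp ℂ 2 μ →L[ℂ] Lp ℂ 2 μ} (s : Finset ι) {m : ι → ℝ → ℂ}
    (hm : ∀ i, FacM V W (m i)) : FacM V W (fun x => ∏ i ∈ s, m i x) := by
  induction s using Finset.induction_on with
  | empty => simpa using FacM.one V W
  | insert i s hi ih => simpa [Finset.prod_insert hi] using (hm i).mul ih

theorem FacM.base (hcompact : IsCompact (msupp μ))
    {e : HilbertBasis ℕ ℂ (Lp ℂ 2 μ)} {V W J : Lp ℂ 2 μ →L[ℂ] Lp ℂ 2 μ} (h : ShiftPair e V W)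
    (hJ : IsMul μ J (fun x => (x : ℂ)))
    (hJc : IsCompactOperator (J - (2⁻¹ : ℂ) • (V + W) : Lp ℂ 2 μ →L[ℂ] Lp ℂ 2 μ))
    {c : ℂ} (hc : c ∉ msuppC μ) :
    FacM V W (fun x => (x : ℂ) - c) ∧ FacM V W (fun x => ((x : ℂ) - c)⁻¹) := by
  obtain ⟨δ, hδ, hfar⟩ := ae_far hcompact hc
  have hmeas : Measurable (fun x : ℝ => ((x : ℂ) - c)⁻¹) :=
    (Complex.measurable_ofReal.sub_const c).inv
  obtain ⟨Y, hY⟩ := exists_isMul (μ := μ) hmeas.aestronglyMeasurable δ⁻¹ (by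
    filter_upwards [hfar] with x hx
    rw [norm_inv]
    exact inv_anti₀ hδ hx)
  have hne : ∀ᵐ x : ℝ ∂μ, (x : ℂ) - c ≠ 0 := by
    filter_upwards [hfar] with x hx h0
    rw [h0, norm_zero] at hx
    linarith
  have hJ1 := hJ.sub_const c
  have e1 : (J - algebraMap ℂ _ c) * Y = 1 := by
    refine (hJ1.mul hY).unique IsMul.one ?_
    filter_upwards [hne] with x hx
    exact mul_inv_cancel₀ hx
  have e2 : Y * (J - algebraMap ℂ _ c) = 1 := by
    refine (hY.mul hJ1).unique IsMul.one ?_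
    filter_upwards [hne] with x hx
    exact inv_mul_cancel₀ hx
  have hF := Fac.base h hJc e1
  exact ⟨⟨_, hJ1, hF⟩, ⟨_, hY, hF.inv e2⟩⟩

/-- Summary of the operator-theoretic part. -/
theorem operator_summary {a b : ℕ → ℝ} (hcompact : IsCompact (msupp μ))
    (hbd : ∃ M : ℝ, ∀ᵐ x ∂μ, |x| ≤ M) (hM : IsM01 μ l a b)
    {h ℓ : ℕ} (c : Fin h → ℂ) (d : Fin ℓ → ℂ) (A : Fin h → ℕ) (B : Fin ℓ → ℕ)
    (hc : ∀ i, c i ∉ msuppC μ) (hd : ∀ j, d j ∉ msuppC μ) :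
    ∃ (e : HilbertBasis ℕ ℂ (Lp ℂ 2 μ)) (V W Z R : Lp ℂ 2 μ →L[ℂ] Lp ℂ 2 μ)
      (Y : (Lp ℂ 2 μ →L[ℂ] Lp ℂ 2 μ)ˣ),
      (∀ k, e k = peL hbd (cx (l k))) ∧ ShiftPair e V W ∧ IsMul μ R (ratFn c d A B) ∧
      Z * R = 1 ∧
      Tendsto (fun n => W ^ n * Z * V ^ n) atTop (𝓝 (Y : Lp ℂ 2 μ →L[ℂ] Lp ℂ 2 μ)) ∧
      inner ℂ (e 0) (((Y⁻¹ : (Lp ℂ 2 μ →L[ℂ] Lp ℂ 2 μ)ˣ) : Lp ℂ 2 μ →L[ℂ] Lp ℂ 2 μ) (e 0))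
        ≠ (0 : ℂ) := by
  obtain ⟨e, he⟩ := exists_basis hbd hM.onp
  obtain ⟨V, W, hVW⟩ := exists_shift e
  obtain ⟨M, hMb⟩ := id hbd
  obtain ⟨J, hJ⟩ := exists_isMul (μ := μ) (m := fun x => (x : ℂ))
    Complex.continuous_ofReal.aestronglyMeasurable M (by
      filter_upwards [hMb] with x hx
      simpa using hx)
  have hJc := J_compact hbd hM he hVW hJ
  have hr : FacM V W (ratFn c d A B) := by
    have h1 := (FacM.prod Finset.univ
      (fun i => (FacM.base hcompact hVW hJ hJc (hc i)).1.pow (A i))).mul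
      (FacM.prod Finset.univ (fun j => (FacM.base hcompact hVW hJ hJc (hd j)).2.pow (B j)))
    have h2 : ratFn c d A B = fun x : ℝ => (∏ i, ((x : ℂ) - c i) ^ (A i)) *
        ∏ j, (((x : ℂ) - d j)⁻¹) ^ (B j) := by
      funext x
      rw [ratFn, div_eq_mul_inv, ← Finset.prod_inv_distrib]
      simp
    rw [h2]; exact h1
  have hnec : ∀ i, ∀ᵐ x : ℝ ∂μ, (x : ℂ) - c i ≠ 0 := fun i =>
    (ae_mem_msupp μ).mono fun x hx h0 => hc i ⟨x, hx, sub_eq_zero.mp h0⟩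
  have hned : ∀ j, ∀ᵐ x : ℝ ∂μ, (x : ℂ) - d j ≠ 0 := fun j =>
    (ae_mem_msupp μ).mono fun x hx h0 => hd j ⟨x, hx, sub_eq_zero.mp h0⟩
  obtain ⟨R, hR, hRF⟩ := hr
  have hZ : FacM V W (fun x => (ratFn c d A B x)⁻¹) := by
    have h1 := (FacM.prod Finset.univ
      (fun i => (FacM.base hcompact hVW hJ hJc (hc i)).2.pow (A i))).mul
      (FacM.prod Finset.univ (fun j => (FacM.base hcompact hVW hJ hJc (hd j)).1.pow (B j)))
    have h2 : (fun x => (ratFn c d A B x)⁻¹) = fun x : ℝ => (∏ i, (((x : ℂ) - c i)⁻¹) ^ (A i)) *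
        ∏ j, ((x : ℂ) - d j) ^ (B j) := by
      funext x
      rw [ratFn, inv_div, div_eq_mul_inv, ← Finset.prod_inv_distrib, mul_comm]
      simp
    rw [h2]; exact h1
  obtain ⟨Z, hZ, hZF⟩ := hZ
  have hZR : Z * R = 1 := by
    refine (hZ.mul hR).unique IsMul.one ?_
    filter_upwards [ae_all_iff.mpr hnec, ae_all_iff.mpr hned] with x hx hx'
    apply inv_mul_cancel₀
    rw [ratFn]
    exact div_ne_zero (Finset.prod_ne_zero_iff.mpr fun i _ => pow_ne_zero _ (hx i))
      (Finset.prod_ne_zero_iff.mpr fun j _ => pow_ne_zero _ (hx' j))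
  obtain ⟨Y, hY1, hY2⟩ := hZF.tendsto hVW
  exact ⟨e, V, W, Z, R, Y, he, hVW, hR, hZR, hY1, hY2⟩

end MulOp

/-! ### Part 4: algebraic part, and conclusion -/

section Algebraic

/-- algebraic version of `IsQPoly` for a linear functional on polynomials -/
def IsQL (L : ℂ[X] →ₗ[ℂ] ℂ) (n : ℕ) (Q : ℂ[X]) : Prop :=
  Q.Monic ∧ (∀ p : ℂ[X], p.degree < n → L (p * Q) = 0) ∧
  (∀ q : ℂ[X], q ≠ 0 → (∀ p : ℂ[X], p.degree < n → L (p * q) = 0) → Q.degree ≤ q.degree)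

theorem IsQL.natDegree_le {L : ℂ[X] →ₗ[ℂ] ℂ} {n : ℕ} {Q : ℂ[X]} (h : IsQL L n Q) :
    Q.natDegree ≤ n := by
  let T : ℂ[X] →ₗ[ℂ] (Fin n → ℂ) := LinearMap.pi fun k =>
    L ∘ₗ LinearMap.mulLeft ℂ ((X : ℂ[X]) ^ (k : ℕ))
  let S : Polynomial.degreeLT ℂ (n + 1) →ₗ[ℂ] (Fin n → ℂ) := T ∘ₗ Submodule.subtype _
  have hfr : Module.finrank ℂ (Polynomial.degreeLT ℂ (n + 1)) = n + 1 := by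
    rw [(Polynomial.degreeLTEquiv ℂ (n + 1)).finrank_eq]; simp
  have : FiniteDimensional ℂ (Polynomial.degreeLT ℂ (n + 1)) :=
    Module.finite_of_finrank_pos (by rw [hfr]; omega)
  have hker : LinearMap.ker S ≠ ⊥ := LinearMap.ker_ne_bot_of_finrank_lt (by rw [hfr]; simp)
  obtain ⟨⟨q, hq⟩, hqk, hq0⟩ := (Submodule.ne_bot_iff _).mp hker
  have hq0' : q ≠ 0 := fun hh => hq0 (Subtype.ext hh)
  have hX : ∀ k < n, L (X ^ k * q) = 0 := by
    intro k hk
    have h1 : S ⟨q, hq⟩ = 0 := hqk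
    exact congrFun h1 ⟨k, hk⟩
  have hqo : ∀ p : ℂ[X], p.degree < n → L (p * q) = 0 := by
    intro p hp
    have h2 : p = ∑ k ∈ Finset.range n, C (p.coeff k) * X ^ k := by
      ext m
      rw [Polynomial.finsetSum_coeff]
      simp only [Polynomial.coeff_C_mul_X_pow]
      by_cases hm : m < n
      · simp [hm]
      · rw [Polynomial.coeff_eq_zero_of_degree_lt (hp.trans_le (by exact_mod_cast not_lt.mp hm))]
        simp [hm]
    rw [h2, Finset.sum_mul, map_sum]
    apply Finset.sum_eq_zero
    intro k hk
    rw [mul_assoc, ← Polynomial.smul_eq_C_mul, map_smul, hX k (Finset.mem_range.mp hk), smul_zero]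
  have h3 := h.2.2 q hq0' hqo
  have h4 := Polynomial.mem_degreeLT.mp hq
  have h5 : Q.degree < (n + 1 : ℕ) := h3.trans_lt h4
  have h6 := (Polynomial.natDegree_lt_iff_degree_lt h.1.ne_zero).mpr h5
  omega

theorem degree_sub_monic {p q : ℂ[X]} {n : ℕ} (hp : p.Monic) (hq : q.Monic)
    (hpn : p.natDegree = n) (hqn : q.natDegree = n) : (p - q).degree < n := by
  rw [Polynomial.degree_lt_iff_coeff_zero]
  intro m hm
  rcases hm.eq_or_lt with rfl | hm
  · rw [Polynomial.coeff_sub]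
    have h1 := hp.coeff_natDegree
    have h2 := hq.coeff_natDegree
    rw [hpn] at h1; rw [hqn] at h2
    rw [h1, h2, sub_self]
  · rw [Polynomial.coeff_sub, Polynomial.coeff_eq_zero_of_natDegree_lt (by omega),
      Polynomial.coeff_eq_zero_of_natDegree_lt (by omega), sub_self]

theorem IsQL.recurrence {L : ℂ[X] →ₗ[ℂ] ℂ} {n : ℕ} {Q0 Q1 Q2 : ℂ[X]}
    (h0 : IsQL L n Q0) (h1 : IsQL L (n + 1) Q1) (h2 : IsQL L (n + 2) Q2)
    (d0 : Q0.natDegree = n) (d1 : Q1.natDegree = n + 1) (d2 : Q2.natDegree = n + 2)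
    (i0 : L (Q0 * Q0) ≠ 0) (i1 : L (Q1 * Q1) ≠ 0) {β α : ℂ}
    (hβ : β = (L (Q1 * Q1))⁻¹ * L (X * (Q1 * Q1))) (hα : α = L (Q1 * Q1) / L (Q0 * Q0)) :
    Q2 = (X - C β) * Q1 - C α * Q0 := by
  set D := Q2 - ((X - C β) * Q1 - C α * Q0) with hD
  have hLD : ∀ p, L (p * D) = L (p * Q2) - L (X * p * Q1) + β * L (p * Q1) + α * L (p * Q0) := by
    intro p
    have e1 : p * D = p * Q2 - X * p * Q1 + β • (p * Q1) + α • (p * Q0) := by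
      rw [hD, Polynomial.smul_eq_C_mul, Polynomial.smul_eq_C_mul]; ring
    rw [e1, map_add, map_add, map_sub, map_smul, map_smul, smul_eq_mul, smul_eq_mul]
  have hXm : (X * Q1).Monic := Polynomial.monic_X.mul h1.1
  have hXd : (X * Q1).natDegree = n + 2 := by
    rw [Polynomial.Monic.natDegree_mul Polynomial.monic_X h1.1, Polynomial.natDegree_X, d1]; omega
  have hX0m : (X * Q0).Monic := Polynomial.monic_X.mul h0.1
  have hX0d : (X * Q0).natDegree = n + 1 := by
    rw [Polynomial.Monic.natDegree_mul Polynomial.monic_X h0.1, Polynomial.natDegree_X, d0]; omega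
  have degQ0 : Q0.degree = n := by rw [Polynomial.degree_eq_natDegree h0.1.ne_zero, d0]
  have degQ1 : Q1.degree = (n + 1 : ℕ) := by rw [Polynomial.degree_eq_natDegree h1.1.ne_zero, d1]
  have degQ2 : Q2.degree = (n + 2 : ℕ) := by rw [Polynomial.degree_eq_natDegree h2.1.ne_zero, d2]
  have hDdeg : D.degree < (n + 2 : ℕ) := by
    have e1 : D = (Q2 - X * Q1) + (C β * Q1 + C α * Q0) := by rw [hD]; ring
    rw [e1]
    have hlt1 : ((n + 1 : ℕ) : WithBot ℕ) < ((n + 2 : ℕ) : WithBot ℕ) := by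
      exact_mod_cast Nat.lt_succ_self _
    have hlt0 : ((n : ℕ) : WithBot ℕ) < ((n + 2 : ℕ) : WithBot ℕ) := by
      exact_mod_cast (by omega : n < n + 2)
    refine (Polynomial.degree_add_le _ _).trans_lt (max_lt
      (degree_sub_monic h2.1 hXm d2 hXd) ?_)
    refine (Polynomial.degree_add_le _ _).trans_lt (max_lt ?_ ?_)
    · rw [← Polynomial.smul_eq_C_mul]
      exact (Polynomial.degree_smul_le _ _).trans_lt (degQ1 ▸ hlt1)
    · rw [← Polynomial.smul_eq_C_mul]
      exact (Polynomial.degree_smul_le _ _).trans_lt (degQ0 ▸ hlt0)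
  have mono : ∀ {p : ℂ[X]} {i j : ℕ}, p.degree < i → i ≤ j → p.degree < j := by
    intro p i j h hij
    exact h.trans_le (by exact_mod_cast hij)
  -- orthogonality to low degrees
  have o1 : ∀ p : ℂ[X], p.degree < n → L (p * D) = 0 := by
    intro p hp
    have hXp : (X * p : ℂ[X]).degree < ((n + 1 : ℕ) : WithBot ℕ) := by
      rw [mul_comm, Polynomial.degree_lt_iff_coeff_zero]
      intro m hm
      obtain ⟨m, rfl⟩ : ∃ k, m = k + 1 := ⟨m - 1, by omega⟩
      rw [Polynomial.coeff_mul_X]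
      exact Polynomial.coeff_eq_zero_of_degree_lt (hp.trans_le (by exact_mod_cast (by omega)))
    rw [hLD, h2.2.1 p (mono hp (by omega)), h1.2.1 _ hXp, h1.2.1 p (mono hp (by omega)),
      h0.2.1 p hp]
    ring
  have o2 : L (Q0 * D) = 0 := by
    have hq : Q0.degree < (n + 1 : ℕ) := by
      rw [degQ0]; exact_mod_cast Nat.lt_succ_self _
    have e1 : L (X * Q0 * Q1) = L (Q1 * Q1) := by
      have := h1.2.1 _ (degree_sub_monic hX0m h1.1 hX0d d1)
      rw [sub_mul, map_sub] at this
      exact sub_eq_zero.mp this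
    rw [hLD, h2.2.1 _ (mono hq (by omega)), h1.2.1 _ hq, e1, hα]
    field_simp
    ring
  have o3 : L (Q1 * D) = 0 := by
    have hq : Q1.degree < (n + 2 : ℕ) := by
      rw [degQ1]; exact_mod_cast Nat.lt_succ_self _
    have e1 : L (Q1 * Q0) = 0 := by
      rw [mul_comm]
      exact h1.2.1 _ (by rw [degQ0]; exact_mod_cast Nat.lt_succ_self _)
    rw [hLD, h2.2.1 _ hq, e1, hβ, mul_assoc X Q1 Q1]
    field_simp
    ring
  have o4 : ∀ p : ℂ[X], p.degree < (n + 1 : ℕ) → L (p * D) = 0 := by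
    intro p hp
    have hd : (p - p.coeff n • Q0).degree < n := by
      rw [Polynomial.degree_lt_iff_coeff_zero]
      intro m hm
      rcases hm.eq_or_lt with rfl | hm
      · have := h0.1.coeff_natDegree
        rw [d0] at this
        simp [this]
      · have e2 : p.coeff m = 0 := Polynomial.coeff_eq_zero_of_degree_lt
          (hp.trans_le (by exact_mod_cast hm))
        have e3 : Q0.coeff m = 0 := Polynomial.coeff_eq_zero_of_natDegree_lt (by omega)
        simp [e2, e3]
    have e1 := o1 _ hd
    rw [sub_mul, map_sub, smul_mul_assoc, map_smul, o2, smul_zero, sub_zero] at e1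
    exact e1
  have o5 : ∀ p : ℂ[X], p.degree < (n + 2 : ℕ) → L (p * D) = 0 := by
    intro p hp
    have hd : (p - p.coeff (n + 1) • Q1).degree < (n + 1 : ℕ) := by
      rw [Polynomial.degree_lt_iff_coeff_zero]
      intro m hm
      rcases hm.eq_or_lt with rfl | hm
      · have := h1.1.coeff_natDegree
        rw [d1] at this
        simp [this]
      · have e2 : p.coeff m = 0 := Polynomial.coeff_eq_zero_of_degree_lt
          (hp.trans_le (by exact_mod_cast hm))
        have e3 : Q1.coeff m = 0 := Polynomial.coeff_eq_zero_of_natDegree_lt (by omega)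
        simp [e2, e3]
    have e1 := o4 _ hd
    rw [sub_mul, map_sub, smul_mul_assoc, map_smul, o3, smul_zero, sub_zero] at e1
    exact e1
  have hD0 : D = 0 := by
    by_contra hne
    have := h2.2.2 D hne o5
    rw [degQ2] at this
    exact absurd hDdeg (not_lt.mpr this)
  exact sub_eq_zero.mp hD0

theorem coeff_of_recurrence {n : ℕ} {Q0 Q1 Q2 : ℂ[X]} (d0 : Q0.natDegree = n)
    (d1 : Q1.natDegree = n + 1) (m1 : Q1.Monic) {β α : ℂ}
    (h : Q2 = (X - C β) * Q1 - C α * Q0) : β = Q1.coeff n - Q2.coeff (n + 1) := by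
  have e3 : Q0.coeff (n + 1) = 0 := Polynomial.coeff_eq_zero_of_natDegree_lt (by omega)
  have e4 : Q1.coeff (n + 1) = 1 := by
    have := m1.coeff_natDegree
    rwa [d1] at this
  have := congrArg (fun p => p.coeff (n + 1)) h
  simp only [sub_mul, Polynomial.coeff_sub, Polynomial.coeff_C_mul, e3, e4,
    Polynomial.coeff_X_mul] at this
  rw [this]; ring

end Algebraic

section Final

set_option linter.unusedSectionVars false

variable {μ : Measure ℝ} [IsFiniteMeasure μ] {l : ℕ → ℝ[X]}

/-- the linear functional `p ↦ ∫ p r dμ` -/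
noncomputable def Lr (μ : Measure ℝ) (r : ℝ → ℂ)
    (hIntg : ∀ p : ℂ[X], Integrable (fun x : ℝ => p.eval (x : ℂ) * r x) μ) : ℂ[X] →ₗ[ℂ] ℂ where
  toFun p := ∫ x : ℝ, p.eval (x : ℂ) * r x ∂μ
  map_add' p q := by
    rw [← integral_add (hIntg p) (hIntg q)]
    congr 1; funext x
    rw [Polynomial.eval_add, add_mul]
  map_smul' a p := by
    rw [RingHom.id_apply, smul_eq_mul, ← integral_const_mul]
    congr 1; funext x
    rw [Polynomial.eval_smul, smul_eq_mul, mul_assoc]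

theorem integrable_of_isMul (hbd : ∃ M : ℝ, ∀ᵐ x ∂μ, |x| ≤ M) {r : ℝ → ℂ}
    {R : Lp ℂ 2 μ →L[ℂ] Lp ℂ 2 μ} (hR : IsMul μ R r) (p : ℂ[X]) :
    Integrable (fun x : ℝ => p.eval (x : ℂ) * r x) μ := by
  have h1 : Integrable (R (peL hbd p)) μ := (Lp.memLp _).integrable (by norm_num)
  refine h1.congr ?_
  filter_upwards [hR (peL hbd p), peL_coe hbd p] with x h2 h3
  rw [h2, h3, mul_comm]

/-- the data obtained from the operator part -/
structure OpSetup (hbd : ∃ M : ℝ, ∀ᵐ x ∂μ, |x| ≤ M) (l : ℕ → ℝ[X]) (L : ℂ[X] →ₗ[ℂ] ℂ)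
    (e : HilbertBasis ℕ ℂ (Lp ℂ 2 μ)) (V W Z R : Lp ℂ 2 μ →L[ℂ] Lp ℂ 2 μ) : Prop where
  hl : IsOrthonormalPolys μ l
  he : ∀ k, e k = peL hbd (cx (l k))
  sh : ShiftPair e V W
  ZR : Z * R = 1
  hL : ∀ k q, inner ℂ (e k) (R (peL hbd q)) = L (cx (l k) * q)

theorem opSetup_of (hbd : ∃ M : ℝ, ∀ᵐ x ∂μ, |x| ≤ M) {r : ℝ → ℂ}
    {e : HilbertBasis ℕ ℂ (Lp ℂ 2 μ)} {V W Z R : Lp ℂ 2 μ →L[ℂ] Lp ℂ 2 μ} (hR : IsMul μ R r)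
    (hl : IsOrthonormalPolys μ l) (he : ∀ k, e k = peL hbd (cx (l k)))
    (sh : ShiftPair e V W) (ZR : Z * R = 1) :
    OpSetup hbd l (Lr μ r (integrable_of_isMul hbd hR)) e V W Z R := by
  refine ⟨hl, he, sh, ZR, fun k q => ?_⟩
  rw [he, inner_cx]
  apply integral_congr_ae
  filter_upwards [hR (peL hbd q), peL_coe hbd q] with x h2 h3
  rw [h2, h3, Polynomial.eval_mul]; ring

theorem IsOrthonormalPolys.coeff_pos (hl : IsOrthonormalPolys μ l) (n : ℕ) :
    0 < (l n).coeff n := by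
  have := hl.leadingCoeff_pos n
  rwa [Polynomial.leadingCoeff, hl.natDegree_eq] at this

theorem IsOrthonormalPolys.coeff_ne (hl : IsOrthonormalPolys μ l) (n : ℕ) :
    ((l n).coeff n : ℂ) ≠ 0 := by
  exact_mod_cast (hl.coeff_pos n).ne'

theorem cx_coeff (p : ℝ[X]) (n : ℕ) : (cx p).coeff n = (p.coeff n : ℂ) := by
  simp [cx]

theorem degree_sub_cx (hl : IsOrthonormalPolys μ l) {n : ℕ} {p : ℂ[X]}
    (hp : p.degree < (n + 1 : ℕ)) :
    (p - (p.coeff n / ((l n).coeff n : ℂ)) • cx (l n)).degree < n := by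
  rw [Polynomial.degree_lt_iff_coeff_zero]
  intro m hm
  rcases hm.eq_or_lt with rfl | hm
  · have := hl.coeff_ne n
    simp [cx_coeff, this]
  · have h1 : p.coeff m = 0 := Polynomial.coeff_eq_zero_of_degree_lt
      (hp.trans_le (by exact_mod_cast hm))
    have h2 : (l n).coeff m = 0 := Polynomial.coeff_eq_zero_of_natDegree_lt
      (by rw [hl.natDegree_eq]; exact hm)
    simp [cx_coeff, h1, h2]

theorem degree_lt_succ {p : ℂ[X]} {n : ℕ} (hp : p.natDegree = n) : p.degree < (n + 1 : ℕ) :=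
  Polynomial.degree_le_natDegree.trans_lt (by rw [hp]; exact_mod_cast Nat.lt_succ_self _)

theorem degree_cx_lt (hl : IsOrthonormalPolys μ l) {k n : ℕ} (hk : k < n) :
    (cx (l k)).degree < n := by
  rw [Polynomial.degree_lt_iff_coeff_zero]
  intro m hm
  rw [cx_coeff, Polynomial.coeff_eq_zero_of_natDegree_lt (by rw [hl.natDegree_eq]; omega)]
  simp

namespace OpSetup

variable {hbd : ∃ M : ℝ, ∀ᵐ x ∂μ, |x| ≤ M} {L : ℂ[X] →ₗ[ℂ] ℂ}
  {e : HilbertBasis ℕ ℂ (Lp ℂ 2 μ)} {V W Z R : Lp ℂ 2 μ →L[ℂ] Lp ℂ 2 μ}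

theorem inner_lt (S : OpSetup hbd l L e V W Z R) {k : ℕ} {p : ℂ[X]} (hp : p.degree < k) :
    inner ℂ (e k) (peL hbd p) = (0 : ℂ) := by
  have h1 := mem_span_cx S.hl k p hp
  clear hp
  induction h1 using Submodule.span_induction with
  | mem x hx =>
    obtain ⟨j, hj, rfl⟩ := hx
    have hj' : j < k := hj
    rw [S.he, inner_cx_cx hbd S.hl, if_neg (by omega)]
  | zero => simp
  | add x y _ _ hx hy => rw [map_add, inner_add_right, hx, hy, add_zero]
  | smul a x _ hx => rw [map_smul, inner_smul_right, hx, mul_zero]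

theorem inner_top (S : OpSetup hbd l L e V W Z R) {n : ℕ} {p : ℂ[X]}
    (hp : p.degree < (n + 1 : ℕ)) :
    inner ℂ (e n) (peL hbd p) = p.coeff n / ((l n).coeff n : ℂ) := by
  have h1 := S.inner_lt (degree_sub_cx S.hl hp)
  rw [map_sub, inner_sub_right, map_smul, inner_smul_right, sub_eq_zero] at h1
  rw [h1, S.he, inner_cx_cx hbd S.hl, if_pos rfl, mul_one]

theorem Wn_peL (S : OpSetup hbd l L e V W Z R) {n : ℕ} {p : ℂ[X]}
    (hp : p.degree < (n + 1 : ℕ)) :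
    (W ^ n) (peL hbd p) = (p.coeff n / ((l n).coeff n : ℂ)) • e 0 := by
  apply hb_ext e
  intro k
  rw [S.sh.adjn', S.sh.Vn, inner_smul_right]
  rcases k with _ | k
  · rw [add_zero, S.inner_top hp, hb_inner]; simp
  · rw [S.inner_lt (hp.trans_le (by exact_mod_cast (by omega))), hb_inner]; simp

theorem peL_inj (S : OpSetup hbd l L e V W Z R) {p : ℂ[X]} (hp : peL hbd p = 0) : p = 0 := by
  by_contra hne
  have h1 := S.inner_top (degree_lt_succ (p := p) rfl)
  rw [hp, inner_zero_right] at h1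
  have h2 := S.hl.coeff_ne p.natDegree
  have h3 : p.coeff p.natDegree ≠ 0 := by
    rw [Polynomial.coeff_natDegree]; exact Polynomial.leadingCoeff_ne_zero.mpr hne
  exact div_ne_zero h3 h2 h1.symm

theorem Z_R (S : OpSetup hbd l L e V W Z R) (f : Lp ℂ 2 μ) : Z (R f) = f := by
  have := congrArg (fun T : Lp ℂ 2 μ →L[ℂ] Lp ℂ 2 μ => T f) S.ZR
  simpa using this

theorem VW_R (S : OpSetup hbd l L e V W Z R) {n : ℕ} {q : ℂ[X]}
    (hq : ∀ p : ℂ[X], p.degree < n → L (p * q) = 0) :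
    (V ^ n) ((W ^ n) (R (peL hbd q))) = R (peL hbd q) := by
  apply S.sh.VWn_of
  intro k hk
  rw [S.hL]
  exact hq _ (degree_cx_lt S.hl hk)

theorem Y_gamma (S : OpSetup hbd l L e V W Z R) {n : ℕ} {q : ℂ[X]}
    (hq : ∀ p : ℂ[X], p.degree < n → L (p * q) = 0) :
    (W ^ n * Z * V ^ n) ((W ^ n) (R (peL hbd q))) = (W ^ n) (peL hbd q) := by
  rw [mul_apply_eq_comp, mul_apply_eq_comp, S.VW_R hq, S.Z_R]

theorem inverse_apply {T : Lp ℂ 2 μ →L[ℂ] Lp ℂ 2 μ} (hT : IsUnit T) {f g : Lp ℂ 2 μ}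
    (h : T f = g) : f = Ring.inverse T g := by
  have h1 := Ring.inverse_mul_cancel T hT
  have := congrArg (fun T : Lp ℂ 2 μ →L[ℂ] Lp ℂ 2 μ => T f) h1
  rw [← h]
  simpa using this.symm

theorem natDegree_eq (S : OpSetup hbd l L e V W Z R) {n : ℕ} {Q : ℂ[X]} (hQ : IsQL L n Q)
    (hu : IsUnit (W ^ n * Z * V ^ n)) : Q.natDegree = n := by
  apply le_antisymm hQ.natDegree_le
  by_contra hlt
  push Not at hlt
  have hd : Q.degree < n := (Polynomial.natDegree_lt_iff_degree_lt hQ.1.ne_zero).mp hlt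
  have h1 := S.Y_gamma hQ.2.1
  rw [S.Wn_peL (hd.trans (by exact_mod_cast Nat.lt_succ_self n)),
    Polynomial.coeff_eq_zero_of_degree_lt hd, zero_div, zero_smul] at h1
  have h2 := inverse_apply hu h1
  rw [map_zero] at h2
  have h3 := S.VW_R hQ.2.1
  rw [h2, map_zero] at h3
  have h4 := S.Z_R (peL hbd Q)
  rw [← h3, map_zero] at h4
  exact hQ.1.ne_zero (S.peL_inj h4.symm)

theorem gamma (S : OpSetup hbd l L e V W Z R) {n : ℕ} {Q : ℂ[X]} (hQ : IsQL L n Q)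
    (hu : IsUnit (W ^ n * Z * V ^ n)) :
    (W ^ n) (R (peL hbd Q)) =
      ((l n).coeff n : ℂ)⁻¹ • Ring.inverse (W ^ n * Z * V ^ n) (e 0) := by
  have hd := S.natDegree_eq hQ hu
  have h1 := S.Y_gamma hQ.2.1
  have hc : Q.coeff n = 1 := by
    have := hQ.1.coeff_natDegree
    rwa [hd] at this
  rw [S.Wn_peL (degree_lt_succ hd), hc, one_div] at h1
  rw [inverse_apply hu h1, map_smul]

theorem int_eq (S : OpSetup hbd l L e V W Z R) {n : ℕ} {Q : ℂ[X]} (hQ : IsQL L n Q)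
    (hu : IsUnit (W ^ n * Z * V ^ n)) :
    L (Q * Q) = (((l n).coeff n : ℂ) ^ 2)⁻¹ *
      inner ℂ (e 0) (Ring.inverse (W ^ n * Z * V ^ n) (e 0)) := by
  have hd := S.natDegree_eq hQ hu
  have hc : Q.coeff n = 1 := by
    have := hQ.1.coeff_natDegree
    rwa [hd] at this
  have h1 := hQ.2.1 _ (degree_sub_cx S.hl (degree_lt_succ hd))
  rw [sub_mul, map_sub, smul_mul_assoc, map_smul, sub_eq_zero, hc, ← S.hL] at h1
  have h2 : e n = (V ^ n) (e 0) := by rw [S.sh.Vn, add_zero]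
  rw [h1, h2, ← S.sh.adjn', S.gamma hQ hu, inner_smul_right, smul_eq_mul]
  ring

theorem coeff_eq (S : OpSetup hbd l L e V W Z R) {n : ℕ} {Q : ℂ[X]} (hQ : IsQL L (n + 1) Q)
    (hu : IsUnit (W ^ (n + 1) * Z * V ^ (n + 1))) :
    Q.coeff n = ((l n).coeff n : ℂ) / ((l (n + 1)).coeff (n + 1) : ℂ) *
      inner ℂ (e 0) ((W ^ n * Z * V ^ n) (V (Ring.inverse (W ^ (n + 1) * Z * V ^ (n + 1)) (e 0)))) +
      ((l (n + 1)).coeff n : ℂ) / ((l (n + 1)).coeff (n + 1) : ℂ) := by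
  have hd := S.natDegree_eq hQ hu
  have hc : Q.coeff (n + 1) = 1 := by
    have := hQ.1.coeff_natDegree
    rwa [hd] at this
  have h1 := S.inner_top (degree_sub_cx S.hl (degree_lt_succ hd))
  rw [map_sub, inner_sub_right, map_smul, inner_smul_right] at h1
  rw [← S.he (n + 1), hb_inner] at h1
  have h2 : e n = (V ^ n) (e 0) := by rw [S.sh.Vn, add_zero]
  have h3 : (W ^ n) (peL hbd Q) = ((l (n + 1)).coeff (n + 1) : ℂ)⁻¹ • (W ^ n * Z * V ^ n)
      (V (Ring.inverse (W ^ (n + 1) * Z * V ^ (n + 1)) (e 0))) := by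
    have e1 := S.VW_R hQ.2.1
    rw [S.gamma hQ hu, pow_succ, mul_apply_eq_comp, map_smul, map_smul] at e1
    have e2 := S.Z_R (peL hbd Q)
    rw [← e1] at e2
    rw [← e2, map_smul, map_smul, mul_apply_eq_comp, mul_apply_eq_comp]
    rfl
  rw [h2, ← S.sh.adjn', h3, inner_smul_right] at h1
  simp only [Polynomial.coeff_sub, Polynomial.coeff_smul, smul_eq_mul, cx_coeff, hc] at h1
  have t1 := S.hl.coeff_ne n
  have t2 := S.hl.coeff_ne (n + 1)
  rw [if_neg (by omega)] at h1
  field_simp at h1 ⊢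
  linear_combination -h1

end OpSetup

end Final

section Coeffs

theorem tau_rec {μ : Measure ℝ} {l : ℕ → ℝ[X]} {a b : ℕ → ℝ} (hM : IsM01 μ l a b) (n : ℕ) :
    (l n).coeff n = a (n + 1) * (l (n + 1)).coeff (n + 1) := by
  have hz : ∀ i j, i < j → (l i).coeff j = 0 := fun i j hij =>
    Polynomial.coeff_eq_zero_of_natDegree_lt (by rw [hM.onp.natDegree_eq]; exact hij)
  rcases n with _ | n
  · have := congrArg (fun p => p.coeff 1) hM.recurrence_zero
    simpa [Polynomial.coeff_X_mul, hz 0 1] using this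
  · have := congrArg (fun p => p.coeff (n + 2)) (hM.recurrence n)
    simpa [Polynomial.coeff_X_mul, hz (n + 1) (n + 2) (by omega), hz n (n + 2) (by omega)] using this

theorem xi_rec {μ : Measure ℝ} {l : ℕ → ℝ[X]} {a b : ℕ → ℝ} (hM : IsM01 μ l a b) (n : ℕ) :
    (l (n + 1)).coeff n = a (n + 2) * (l (n + 2)).coeff (n + 1) +
      b (n + 1) * (l (n + 1)).coeff (n + 1) := by
  have hz : (l n).coeff (n + 1) = 0 :=
    Polynomial.coeff_eq_zero_of_natDegree_lt (by rw [hM.onp.natDegree_eq]; omega)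
  have := congrArg (fun p => p.coeff (n + 1)) (hM.recurrence n)
  simpa [Polynomial.coeff_X_mul, hz] using this

end Coeffs

theorem tendsto_clm {H : Type*} [NormedAddCommGroup H] [NormedSpace ℂ H] {T : ℕ → H →L[ℂ] H}
    {T' : H →L[ℂ] H} {f : ℕ → H} {f' : H} (hT : Tendsto T atTop (𝓝 T'))
    (hf : Tendsto f atTop (𝓝 f')) : Tendsto (fun n => T n (f n)) atTop (𝓝 (T' f')) := by
  have h1 : Continuous fun p : (H →L[ℂ] H) × H => p.1 p.2 :=
    (isBoundedBilinearMap_apply (𝕜 := ℂ) (E := H) (F := H)).continuous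
  exact (h1.tendsto (T', f')).comp (hT.prodMk_nhds hf)

/-- Theorem 2, formulas (3.16)-(3.19). For `μ ∈ M(0,1)`, for
all large `n` one has `1/κ_n² = ∫ Q_n² r dμ ≠ 0` and the three-term recurrence
`Q_{n+1} = (z-β_n) Q_n - α_n² Q_{n-1}` with `β_n → 0` and `α_n² → 1/4`. -/
theorem three_term_recurrence_Q
    (μ : Measure ℝ) [IsFiniteMeasure μ] (l : ℕ → Polynomial ℝ) (a b : ℕ → ℝ)
    (hcompact : IsCompact (msupp μ)) (hinf : (msupp μ).Infinite)
    (hM01 : IsM01 μ l a b)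
    (h ℓ : ℕ) (c : Fin h → ℂ) (d : Fin ℓ → ℂ) (A : Fin h → ℕ) (B : Fin ℓ → ℕ)
    (hA : ∀ i, 0 < A i) (hB : ∀ j, 0 < B j)
    (hc : ∀ i, c i ∉ msuppC μ) (hd : ∀ j, d j ∉ msuppC μ)
    (hcd : ∀ i j, c i ≠ d j)
    (Q : ℕ → Polynomial ℂ) (hQ : ∀ n, IsQPoly μ (ratFn c d A B) n (Q n))
    (IntQ β αsq : ℕ → ℂ)
    (hIntQ : ∀ n, IntQ n =
      ∫ x, ((Q n).eval (x : ℂ)) ^ 2 * ratFn c d A B x ∂μ)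
    (hβ : ∀ n, β n =
      (IntQ n)⁻¹ * ∫ x, (x : ℂ) * ((Q n).eval (x : ℂ)) ^ 2 * ratFn c d A B x ∂μ)
    (hαsq : ∀ n, 1 ≤ n → αsq n = IntQ n / IntQ (n - 1)) :
    (∀ᶠ n in atTop, IntQ n ≠ 0) ∧
    (∃ N : ℕ, ∀ n, N ≤ n →
      Q (n + 2) = (X - C (β (n + 1))) * Q (n + 1) - C (αsq (n + 1)) * Q n) ∧
    Tendsto β atTop (nhds 0) ∧
    Tendsto αsq atTop (nhds (1 / 4)) := by
  have hbd : ∃ M : ℝ, ∀ᵐ x ∂μ, |x| ≤ M := ae_bdd hcompact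
  obtain ⟨e, V, W, Z, R, Y, he, hVW, hR, hZR, hlim, hθ0⟩ :=
    operator_summary hcompact hbd hM01 c d A B hc hd
  set r := ratFn c d A B with hr
  set L := Lr μ r (integrable_of_isMul hbd hR) with hLdef
  have S : OpSetup hbd l L e V W Z R := opSetup_of hbd hR hM01.onp he hVW hZR
  have hLmul : ∀ p q : ℂ[X], L (p * q) = ∫ x : ℝ, p.eval (x : ℂ) * q.eval (x : ℂ) * r x ∂μ := by
    intro p q
    have h1 : L (p * q) = ∫ x : ℝ, (p * q).eval (x : ℂ) * r x ∂μ := rfl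
    rw [h1]
    congr 1; funext x
    rw [Polynomial.eval_mul]
  have hQL : ∀ n, IsQL L n (Q n) := by
    intro n
    refine ⟨(hQ n).1, fun p hp => ?_, fun q hq hh => ?_⟩
    · rw [hLmul]; exact (hQ n).2.1 p hp
    · refine (hQ n).2.2 q hq fun p hp => ?_
      rw [← hLmul]; exact hh p hp
  have hI : ∀ n, IntQ n = L (Q n * Q n) := by
    intro n
    rw [hIntQ, hLmul]
    congr 1; funext x; ring
  have hB' : ∀ n, β n = (L (Q n * Q n))⁻¹ * L (X * (Q n * Q n)) := by
    intro n
    rw [hβ, hI, hLmul X (Q n * Q n)]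
    congr 2; funext x
    rw [Polynomial.eval_mul, Polynomial.eval_X]; ring
  -- limits
  set YY : ℕ → (Lp ℂ 2 μ →L[ℂ] Lp ℂ 2 μ) := fun n => W ^ n * Z * V ^ n with hYY
  have hunit : ∀ᶠ n in atTop, IsUnit (YY n) := hlim.eventually (Units.isOpen.mem_nhds Y.isUnit)
  have hinv : Tendsto (fun n => Ring.inverse (YY n)) atTop
      (𝓝 ((Y⁻¹ : (Lp ℂ 2 μ →L[ℂ] Lp ℂ 2 μ)ˣ) : Lp ℂ 2 μ →L[ℂ] Lp ℂ 2 μ)) := by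
    have h1 := (NormedRing.inverse_continuousAt Y).tendsto.comp hlim
    rwa [Ring.inverse_unit] at h1
  have hinv0 : Tendsto (fun n => Ring.inverse (YY n) (e 0)) atTop
      (𝓝 (((Y⁻¹ : (Lp ℂ 2 μ →L[ℂ] Lp ℂ 2 μ)ˣ) : Lp ℂ 2 μ →L[ℂ] Lp ℂ 2 μ) (e 0))) :=
    tendsto_clm hinv tendsto_const_nhds
  set θ : ℕ → ℂ := fun n => inner ℂ (e 0) (Ring.inverse (YY n) (e 0)) with hθ
  have hθlim : Tendsto θ atTop (𝓝 (inner ℂ (e 0)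
      (((Y⁻¹ : (Lp ℂ 2 μ →L[ℂ] Lp ℂ 2 μ)ˣ) : Lp ℂ 2 μ →L[ℂ] Lp ℂ 2 μ) (e 0)))) :=
    tendsto_const_nhds.inner hinv0
  set s : ℕ → ℂ := fun n => inner ℂ (e 0) (YY n (V (Ring.inverse (YY (n + 1)) (e 0)))) with hs
  obtain ⟨σ, hσ⟩ : ∃ σ, Tendsto s atTop (𝓝 σ) := by
    refine ⟨_, tendsto_const_nhds.inner (tendsto_clm hlim ((V.continuous.tendsto _).comp
      ((tendsto_add_atTop_iff_nat 1).mpr hinv0)))⟩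
  have hθne : ∀ᶠ n in atTop, θ n ≠ 0 := hθlim.eventually_ne hθ0
  have hac : Tendsto (fun n => (a n : ℂ)) atTop (𝓝 (1 / 2)) := by
    have h2 := (Complex.continuous_ofReal.tendsto _).comp hM01.tendsto_a
    simpa [Function.comp_def] using h2
  have hbc : Tendsto (fun n => (b n : ℂ)) atTop (𝓝 0) := by
    have h2 := (Complex.continuous_ofReal.tendsto _).comp hM01.tendsto_b
    simpa [Function.comp_def] using h2
  obtain ⟨N, hN⟩ := eventually_atTop.mp (hunit.and hθne)
  have hIform : ∀ n, N ≤ n → L (Q n * Q n) = (((l n).coeff n : ℂ) ^ 2)⁻¹ * θ n :=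
    fun n hn => S.int_eq (hQL n) (hN n hn).1
  have hIne : ∀ n, N ≤ n → L (Q n * Q n) ≠ 0 := by
    intro n hn
    rw [hIform n hn]
    exact mul_ne_zero (inv_ne_zero (pow_ne_zero _ (hM01.onp.coeff_ne n))) (hN n hn).2
  have hdeg : ∀ n, N ≤ n → (Q n).natDegree = n := fun n hn => S.natDegree_eq (hQL n) (hN n hn).1
  have hrec : ∀ n, N ≤ n →
      Q (n + 2) = (X - C (β (n + 1))) * Q (n + 1) - C (αsq (n + 1)) * Q n := by
    intro n hn
    refine (hQL n).recurrence (hQL (n + 1)) (hQL (n + 2)) (hdeg n hn) (hdeg _ (by omega))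
      (hdeg _ (by omega)) (hIne n hn) (hIne _ (by omega)) (hB' _) ?_
    rw [hαsq (n + 1) (by omega), hI, Nat.add_sub_cancel, hI]
  have htau : ∀ n, ((l n).coeff n : ℂ) = a (n + 1) * ((l (n + 1)).coeff (n + 1) : ℂ) := by
    intro n
    exact_mod_cast congrArg Complex.ofReal (tau_rec hM01 n)
  have hxi : ∀ n, ((l (n + 1)).coeff n : ℂ) = a (n + 2) * ((l (n + 2)).coeff (n + 1) : ℂ) +
      b (n + 1) * ((l (n + 1)).coeff (n + 1) : ℂ) := by
    intro n
    exact_mod_cast congrArg Complex.ofReal (xi_rec hM01 n)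
  have hq : ∀ n, N ≤ n → (Q (n + 1)).coeff n = a (n + 1) * s n +
      ((l (n + 1)).coeff n : ℂ) / ((l (n + 1)).coeff (n + 1) : ℂ) := by
    intro n hn
    rw [S.coeff_eq (hQL (n + 1)) (hN (n + 1) (by omega)).1, htau n,
      mul_div_cancel_right₀ _ (hM01.onp.coeff_ne (n + 1))]
  have hβform : ∀ n, N ≤ n → β (n + 1) =
      a (n + 1) * s n - a (n + 2) * s (n + 1) + b (n + 1) := by
    intro n hn
    rw [coeff_of_recurrence (hdeg n hn) (hdeg (n + 1) (by omega)) (hQL (n + 1)).1 (hrec n hn),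
      hq n hn, hq (n + 1) (by omega)]
    have t2 := hM01.onp.coeff_ne (n + 2)
    have t1 := hM01.onp.coeff_ne (n + 1)
    have t3 := htau (n + 1)
    have t4 : (a (n + 2) : ℂ) ≠ 0 := by
      intro h0
      rw [h0, zero_mul] at t3
      exact t1 t3
    have t5 : ((l (n + 1)).coeff n : ℂ) / ((l (n + 1)).coeff (n + 1) : ℂ) =
        ((l (n + 2)).coeff (n + 1) : ℂ) / ((l (n + 2)).coeff (n + 2) : ℂ) + b (n + 1) := by
      rw [hxi n, add_div, mul_div_cancel_right₀ _ t1, t3, mul_div_mul_left _ _ t4]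
    rw [t5]
    ring
  have hαform : ∀ n, N ≤ n → αsq (n + 1) = (a (n + 1) : ℂ) ^ 2 * (θ (n + 1) / θ n) := by
    intro n hn
    rw [hαsq (n + 1) (by omega), hI, Nat.add_sub_cancel, hI, hIform n hn,
      hIform (n + 1) (by omega), htau n]
    have t1 := hM01.onp.coeff_ne (n + 1)
    have t0 := hM01.onp.coeff_ne n
    have t4 : (a (n + 1) : ℂ) ≠ 0 := by
      intro h0
      rw [htau n, h0, zero_mul] at t0
      exact t0 rfl
    have t5 := (hN n hn).2
    field_simp
  refine ⟨eventually_atTop.mpr ⟨N, fun n hn => by rw [hI]; exact hIne n hn⟩, ⟨N, hrec⟩, ?_, ?_⟩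
  · rw [← tendsto_add_atTop_iff_nat 1]
    have ha1 := (tendsto_add_atTop_iff_nat 1).mpr hac
    have ha2 := (tendsto_add_atTop_iff_nat 2).mpr hac
    have hb1 := (tendsto_add_atTop_iff_nat 1).mpr hbc
    have hs1 := (tendsto_add_atTop_iff_nat 1).mpr hσ
    have h1 := ((ha1.mul hσ).sub (ha2.mul hs1)).add hb1
    rw [sub_self, add_zero] at h1
    refine h1.congr' ?_
    filter_upwards [eventually_ge_atTop N] with n hn
    exact (hβform n hn).symm
  · rw [← tendsto_add_atTop_iff_nat 1]
    have ha1 := (tendsto_add_atTop_iff_nat 1).mpr hac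
    have ht1 := (tendsto_add_atTop_iff_nat 1).mpr hθlim
    have h1 := (ha1.pow 2).mul (ht1.div hθlim hθ0)
    rw [div_self hθ0] at h1
    have h2 : ((1 / 2 : ℂ)) ^ 2 * 1 = 1 / 4 := by norm_num
    rw [h2] at h1
    refine h1.congr' ?_
    filter_upwards [eventually_ge_atTop N] with n hn
    exact (hαform n hn).symm
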